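/- Inner bound for fully quantum distributed compression: let φ^{ABR} be a pure state on A⊗B⊗R. Then every rate pair (Q_A, Q_B) of nonnegative reals satisfying Q_A > ½ I(A;R)_φ, Q_B > ½ I(B;R)_φ, and Q_A + Q_B > ½ J(A;B)_φ is achievable for φ. -/

import Mathlib

open Matrix
open scoped ComplexOrder

open Classical in
/-- Von Neumann entropy `H(M) = −Tr[M log₂ M]`, via eigenvalues (with `0 log 0 = 0`). -/
noncomputable def vnEntropy {n : Type*} [Fintype n] [DecidableEq n] (M : Matrix n n ℂ) : ℝ :=
  if h : M.IsHermitian then ∑ i, -(h.eigenvalues i * Real.logb 2 (h.eigenvalues i)) else 0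

/-- Reduced state on `A` of a state vector on `A ⊗ (B × R)`. -/
noncomputable def redA {ιA ιB ιR : Type} [Fintype ιB] [Fintype ιR]
    (v : ιA × (ιB × ιR) → ℂ) : Matrix ιA ιA ℂ :=
  Matrix.of fun a a' => ∑ q : ιB × ιR, v (a, q) * star (v (a', q))

/-- Reduced state on `R` of a state vector on `A ⊗ (B × R)`. -/
noncomputable def redR {ιA ιB ιR : Type} [Fintype ιA] [Fintype ιB]
    (v : ιA × (ιB × ιR) → ℂ) : Matrix ιR ιR ℂ :=
  Matrix.of fun r r' => ∑ a : ιA, ∑ b : ιB, v (a, (b, r)) * star (v (a, (b, r')))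

/-- Reduced state on `A ⊗ R` of a state vector on `A ⊗ (B × R)`. -/
noncomputable def redAR {ιA ιB ιR : Type} [Fintype ιB]
    (v : ιA × (ιB × ιR) → ℂ) : Matrix (ιA × ιR) (ιA × ιR) ℂ :=
  Matrix.of fun p q => ∑ b : ιB, v (p.1, (b, p.2)) * star (v (q.1, (b, q.2)))

/-- The `n`-copy state vector `|φ⟩^{⊗n}` of `φ` on `A ⊗ (B × R)`, written on
`R^{⊗n} ⊗ (A^{⊗n} ⊗ B^{⊗n})`. -/
noncomputable def iidVec {ιA ιB ιR : Type} (φ : ιA × (ιB × ιR) → ℂ) (n : ℕ) :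
    (Fin n → ιR) × ((Fin n → ιA) × (Fin n → ιB)) → ℂ :=
  fun p => ∏ k : Fin n, φ (p.2.1 k, (p.2.2 k, p.1 k))

/-- The global isometry `I_{R^n} ⊗ (D ∘ (E_A ⊗ E_B))` of a distributed compression code,
with the output ordered as `(R^n × (Â × B̂)) × ((W_A × W_B) × W_C)`. -/
noncomputable def codeMap {ιA ιB ιR : Type} {n : ℕ} {γA ωA γB ωB ωC : Type}
    [Fintype γA] [Fintype γB] [Fintype ιR] [DecidableEq ιR]
    (EA : Matrix (γA × ωA) (Fin n → ιA) ℂ)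
    (EB : Matrix (γB × ωB) (Fin n → ιB) ℂ)
    (D : Matrix (((Fin n → ιA) × (Fin n → ιB)) × ωC) (γA × γB) ℂ) :
    Matrix (((Fin n → ιR) × ((Fin n → ιA) × (Fin n → ιB))) × ((ωA × ωB) × ωC))
      ((Fin n → ιR) × ((Fin n → ιA) × (Fin n → ιB))) ℂ :=
  Matrix.of fun p q =>
    if p.1.1 = q.1 then
      ∑ cA : γA, ∑ cB : γB,
        D (p.1.2, p.2.2) (cA, cB) * EA (cA, p.2.1.1) q.2.1 * EB (cB, p.2.1.2) q.2.2
    else 0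

/-- The fidelity `F = ⟨ψ'| Tr_{W_AW_BW_C}[(I ⊗ D∘(E_A⊗E_B)) ψ' (…)†] |ψ'⟩` of a
distributed compression code on `n` copies of `φ`, where `|ψ'⟩ = |φ⟩^{⊗n}`. -/
noncomputable def codeFidelity {ιA ιB ιR : Type} {n : ℕ} {γA ωA γB ωB ωC : Type}
    [Fintype ιA] [Fintype ιB] [Fintype ιR] [DecidableEq ιR]
    [Fintype γA] [Fintype γB] [Fintype ωA] [Fintype ωB] [Fintype ωC]
    (φ : ιA × (ιB × ιR) → ℂ)
    (EA : Matrix (γA × ωA) (Fin n → ιA) ℂ)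
    (EB : Matrix (γB × ωB) (Fin n → ιB) ℂ)
    (D : Matrix (((Fin n → ιA) × (Fin n → ιB)) × ωC) (γA × γB) ℂ) : ℝ :=
  (star (iidVec φ n) ⬝ᵥ
    (Matrix.of fun i j : (Fin n → ιR) × ((Fin n → ιA) × (Fin n → ιB)) =>
        ∑ w : (ωA × ωB) × ωC,
          (codeMap (ιR := ιR) EA EB D *
              Matrix.vecMulVec (iidVec φ n) (star (iidVec φ n)) *
              (codeMap (ιR := ιR) EA EB D)ᴴ) (i, w) (j, w)).mulVec
      (iidVec φ n)).re

/-- Reduced state on `A ⊗ B` of a state vector on `A ⊗ (B × R)`. -/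
noncomputable def redAB {ιA ιB ιR : Type} [Fintype ιR]
    (v : ιA × (ιB × ιR) → ℂ) : Matrix (ιA × ιB) (ιA × ιB) ℂ :=
  Matrix.of fun p q => ∑ r : ιR, v (p.1, (p.2, r)) * star (v (q.1, (q.2, r)))

/-- Reduced state on `B` of a state vector on `A ⊗ (B × R)`. -/
noncomputable def redB {ιA ιB ιR : Type} [Fintype ιA] [Fintype ιR]
    (v : ιA × (ιB × ιR) → ℂ) : Matrix ιB ιB ℂ :=
  Matrix.of fun b b' => ∑ a : ιA, ∑ r : ιR, v (a, (b, r)) * star (v (a, (b', r)))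

/-- Reduced state on `B ⊗ R` of a state vector on `A ⊗ (B × R)`. -/
noncomputable def redBR {ιA ιB ιR : Type} [Fintype ιA]
    (v : ιA × (ιB × ιR) → ℂ) : Matrix (ιB × ιR) (ιB × ιR) ℂ :=
  Matrix.of fun p q => ∑ a : ιA, v (a, (p.1, p.2)) * star (v (a, (q.1, q.2)))

/-- A rate pair `(Q_A, Q_B)` is achievable for the source `φ^{ABR}` if for every `ε > 0`
there is `N` such that for every `n ≥ N` there is a distributed compression code on `n`
copies of `φ` (isometric encoders `E_A : A^{⊗n} → C_A ⊗ W_A`, `E_B : B^{⊗n} → C_B ⊗ W_B`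
and an isometric decoder `D : C_A ⊗ C_B → Â ⊗ B̂ ⊗ W_C`) with `log₂ d_{C_A} ≤ n Q_A`,
`log₂ d_{C_B} ≤ n Q_B`, and fidelity at least `1 − ε`. -/
noncomputable def achievable {ιA ιB ιR : Type}
    [Fintype ιA] [DecidableEq ιA] [Fintype ιB] [DecidableEq ιB]
    [Fintype ιR] [DecidableEq ιR]
    (φ : ιA × (ιB × ιR) → ℂ) (QA QB : ℝ) : Prop :=
  ∀ ε : ℝ, 0 < ε → ∃ N : ℕ, ∀ n : ℕ, N ≤ n →
    ∃ (dCA dWA dCB dWB dWC : ℕ)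
      (EA : Matrix (Fin dCA × Fin dWA) (Fin n → ιA) ℂ)
      (EB : Matrix (Fin dCB × Fin dWB) (Fin n → ιB) ℂ)
      (D : Matrix (((Fin n → ιA) × (Fin n → ιB)) × Fin dWC) (Fin dCA × Fin dCB) ℂ),
      EAᴴ * EA = 1 ∧ EBᴴ * EB = 1 ∧ Dᴴ * D = 1 ∧
      Real.logb 2 dCA ≤ (n : ℝ) * QA ∧ Real.logb 2 dCB ≤ (n : ℝ) * QB ∧
      1 - ε ≤ codeFidelity φ EA EB D

open Matrix
open scoped ComplexOrder

/-- Squared Frobenius norm. -/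
noncomputable def N2 {m n : Type*} [Fintype m] [Fintype n] (X : Matrix m n ℂ) : ℝ :=
  ∑ i, ∑ j, ‖X i j‖ ^ 2

/-- Contractions. -/
def Ctr {m n : Type*} [Fintype m] [Fintype n] [DecidableEq n] (Z : Matrix m n ℂ) : Prop :=
  (1 - Zᴴ * Z).PosSemidef

set_option linter.unusedSectionVars false

section basics
variable {l m n p q : Type*} [Fintype l] [Fintype m] [Fintype n] [Fintype p] [Fintype q]
  [DecidableEq l] [DecidableEq m] [DecidableEq n] [DecidableEq p] [DecidableEq q]

lemma normsq_c (z : ℂ) : ((‖z‖ ^ 2 : ℝ) : ℂ) = z * star z := by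
  rw [Complex.star_def, Complex.mul_conj, Complex.normSq_eq_norm_sq]

lemma N2_nonneg (X : Matrix m n ℂ) : 0 ≤ N2 X := by unfold N2; positivity

lemma N2_conjTranspose (X : Matrix m n ℂ) : N2 Xᴴ = N2 X := by
  unfold N2; rw [Finset.sum_comm]; simp

lemma N2_eq_trace (X : Matrix m n ℂ) : (N2 X : ℂ) = (Xᴴ * X).trace := by
  unfold N2
  simp only [Matrix.trace, Matrix.diag, Matrix.mul_apply, conjTranspose_apply]
  rw [Finset.sum_comm]
  push_cast
  refine Finset.sum_congr rfl fun i _ => Finset.sum_congr rfl fun j _ => ?_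
  rw [← Complex.ofReal_pow, normsq_c, mul_comm]

lemma N2_eq_re (X : Matrix m n ℂ) : N2 X = ((Xᴴ * X).trace).re := by
  rw [← N2_eq_trace]; simp

lemma Ctr.N2_le {Z : Matrix m n ℂ} (h : Ctr Z) (X : Matrix n p ℂ) : N2 (Z * X) ≤ N2 X := by
  have h1 := (h.conjTranspose_mul_mul_same X).trace_nonneg
  have h2 : Xᴴ * (1 - Zᴴ * Z) * X = Xᴴ * X - (Z * X)ᴴ * (Z * X) := by
    simp only [conjTranspose_mul, Matrix.mul_sub, Matrix.sub_mul, Matrix.mul_one, Matrix.mul_assoc]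
  rw [h2, Matrix.trace_sub, ← N2_eq_trace, ← N2_eq_trace] at h1
  have := (Complex.le_def.1 h1).1
  simpa using this

lemma Ctr.adj {Z : Matrix m n ℂ} (h : Ctr Z) : Ctr Zᴴ := by
  unfold Ctr
  have h1 := (h.mul_mul_conjTranspose_same Z)
  have h2 := posSemidef_conjTranspose_mul_self (1 - Z * Zᴴ)
  have := h2.add h1
  convert this using 1
  simp only [conjTranspose_sub, conjTranspose_one, conjTranspose_mul, conjTranspose_conjTranspose,
    Matrix.mul_sub, Matrix.sub_mul, Matrix.mul_one, Matrix.one_mul, Matrix.mul_assoc]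
  abel

lemma Ctr.mul {Z : Matrix l m ℂ} {Y : Matrix m n ℂ} (hZ : Ctr Z) (hY : Ctr Y) :
    Ctr (Z * Y) := by
  unfold Ctr
  have := hY.add (hZ.conjTranspose_mul_mul_same Y)
  convert this using 1
  simp only [conjTranspose_mul, Matrix.mul_sub, Matrix.sub_mul, Matrix.mul_one, Matrix.mul_assoc]
  abel

lemma Ctr.N2_le' {Z : Matrix m n ℂ} (h : Ctr Z) (X : Matrix p m ℂ) : N2 (X * Z) ≤ N2 X := by
  have := h.adj.N2_le Xᴴ
  rwa [← conjTranspose_mul, N2_conjTranspose, N2_conjTranspose] at this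

lemma Ctr.of_iso {Z : Matrix m n ℂ} (h : Zᴴ * Z = 1) : Ctr Z := by
  unfold Ctr; rw [h, sub_self]; exact PosSemidef.zero

lemma herm_spec {G : Matrix n n ℂ} (h : G.IsHermitian) :
    ∃ Q : Matrix n n ℂ, Qᴴ * Q = 1 ∧ Q * Qᴴ = 1 ∧
      G = Q * diagonal (fun i => (h.eigenvalues i : ℂ)) * Qᴴ := by
  refine ⟨h.eigenvectorUnitary, ?_, ?_, ?_⟩
  · exact (Matrix.mem_unitaryGroup_iff').1 h.eigenvectorUnitary.2
  · exact (Matrix.mem_unitaryGroup_iff).1 h.eigenvectorUnitary.2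
  · exact h.spectral_theorem

lemma psd_spec {G : Matrix n n ℂ} (h : G.PosSemidef) :
    ∃ (Q : Matrix n n ℂ) (d : n → ℝ), Qᴴ * Q = 1 ∧ Q * Qᴴ = 1 ∧ (∀ i, 0 ≤ d i) ∧
      G = Q * diagonal (fun i => (d i : ℂ)) * Qᴴ := by
  obtain ⟨Q, h1, h2, h3⟩ := herm_spec h.isHermitian
  exact ⟨Q, _, h1, h2, fun i => h.eigenvalues_nonneg i, h3⟩

lemma diag_conj {Q : Matrix n n ℂ} (hQ : Qᴴ * Q = 1) (d e : n → ℝ) :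
    (Q * diagonal (fun i => (d i : ℂ)) * Qᴴ) * (Q * diagonal (fun i => (e i : ℂ)) * Qᴴ) =
      Q * diagonal (fun i => ((d i * e i : ℝ) : ℂ)) * Qᴴ := by
  calc _ = Q * diagonal (fun i => (d i : ℂ)) * (Qᴴ * Q) * diagonal (fun i => (e i : ℂ)) * Qᴴ := by
        simp only [Matrix.mul_assoc]
    _ = _ := by
        rw [hQ, Matrix.mul_one, Matrix.mul_assoc Q, diagonal_mul_diagonal]; simp

lemma diag_conj_herm (Q : Matrix n n ℂ) (d : n → ℝ) :
    (Q * diagonal (fun i => (d i : ℂ)) * Qᴴ)ᴴ = Q * diagonal (fun i => (d i : ℂ)) * Qᴴ := by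
  simp only [conjTranspose_mul, conjTranspose_conjTranspose, diagonal_conjTranspose,
    Matrix.mul_assoc]
  congr 2
  ext i j; simp [diagonal_apply]

lemma diag_conj_psd (Q : Matrix n n ℂ) (d : n → ℝ) (hd : ∀ i, 0 ≤ d i) :
    (Q * diagonal (fun i => (d i : ℂ)) * Qᴴ).PosSemidef := by
  apply PosSemidef.mul_mul_conjTranspose_same
  exact PosSemidef.diagonal (fun i => by simpa using hd i)

lemma exists_sqrt {G : Matrix n n ℂ} (h : G.PosSemidef) : ∃ B : Matrix n n ℂ, Bᴴ * B = G := by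
  obtain ⟨Q, d, h1, h2, h3, h4⟩ := psd_spec h
  refine ⟨Q * diagonal (fun i => (Real.sqrt (d i) : ℂ)) * Qᴴ, ?_⟩
  rw [diag_conj_herm, diag_conj h1, h4]
  simp only [Real.mul_self_sqrt (h3 _)]

/-- polar decomposition -/
lemma exists_polar (N : Matrix m n ℂ) : ∃ (S : Matrix n n ℂ) (V : Matrix m n ℂ),
    S.PosSemidef ∧ S * S = Nᴴ * N ∧ Ctr V ∧ Vᴴ * N = S := by
  obtain ⟨Q, d, h1, h2, h3, h4⟩ := psd_spec (posSemidef_conjTranspose_mul_self N)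
  have hs : ∀ i, (Real.sqrt (d i))⁻¹ * d i = Real.sqrt (d i) := fun i => by
    by_cases h : Real.sqrt (d i) = 0
    · simp [h]
    · field_simp; exact (Real.sq_sqrt (h3 i)).symm
  refine ⟨Q * diagonal (fun i => (Real.sqrt (d i) : ℂ)) * Qᴴ,
    N * (Q * diagonal (fun i => (((Real.sqrt (d i))⁻¹ : ℝ) : ℂ)) * Qᴴ),
    diag_conj_psd _ _ (fun i => Real.sqrt_nonneg _), ?_, ?_, ?_⟩
  · rw [diag_conj h1, h4]
    simp only [Real.mul_self_sqrt (h3 _)]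
  · unfold Ctr
    rw [conjTranspose_mul, diag_conj_herm, Matrix.mul_assoc, ← Matrix.mul_assoc Nᴴ, h4,
      diag_conj h1, diag_conj h1]
    have : (1 : Matrix n n ℂ) = Q * diagonal (fun i => (((1 : ℝ)) : ℂ)) * Qᴴ := by simp [h2]
    rw [this, ← Matrix.sub_mul, ← Matrix.mul_sub, diagonal_sub]
    simp only [← Complex.ofReal_sub]
    apply diag_conj_psd
    intro i
    rw [mul_comm (d i), ← mul_assoc, mul_comm, ← mul_assoc, mul_comm (d i), hs]
    by_cases h : Real.sqrt (d i) = 0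
    · simp [h]
    · rw [mul_inv_cancel₀ h]; simp
  · rw [conjTranspose_mul, diag_conj_herm, Matrix.mul_assoc, h4, diag_conj h1]
    simp only [hs]

/-- completing a contraction to an isometry -/
lemma Ctr.complete {c w i : Type} [Fintype c] [Fintype w] [Fintype i] [DecidableEq c]
    [DecidableEq w] [DecidableEq i] [Nonempty c] {Z : Matrix (c × w) i ℂ} (h : Ctr Z) :
    ∃ (d : ℕ) (emb : w → Fin d) (E : Matrix (c × Fin d) i ℂ), Function.Injective emb ∧ Eᴴ * E = 1 ∧
      ∀ x y z, E (x, emb y) z = Z (x, y) z := by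
  obtain ⟨B, hB⟩ := exists_sqrt h
  let e := Fintype.equivFin (w ⊕ i)
  obtain ⟨c0⟩ := ‹Nonempty c›
  refine ⟨Fintype.card (w ⊕ i), fun y => e (Sum.inl y),
    Matrix.of fun p z => Sum.elim (fun y => Z (p.1, y) z)
      (fun j => if p.1 = c0 then B j z else 0) (e.symm p.2), ?_, ?_, ?_⟩
  · intro a b hab; simpa using hab
  · have : (1 : Matrix i i ℂ) = Zᴴ * Z + Bᴴ * B := by rw [hB]; abel
    rw [this]
    ext z z'
    simp only [Matrix.mul_apply, Matrix.add_apply, conjTranspose_apply, of_apply,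
      Fintype.sum_prod_type]
    rw [Finset.sum_comm, ← e.sum_comp]
    simp only [Equiv.symm_apply_apply, Fintype.sum_sum_type, Sum.elim_inl, Sum.elim_inr]
    rw [Finset.sum_comm]
    congr 1
    refine Finset.sum_congr rfl fun j _ => ?_
    rw [Finset.sum_eq_single c0] <;> simp +contextual
  · intro x y z; simp

end basics

open Matrix
open scoped ComplexOrder
set_option linter.unusedSectionVars false

section decoup
variable {α : Type*} [Fintype α] [DecidableEq α]

/-- random cube-root-of-unity phases -/
noncomputable def ph (e : α → ZMod 3) (i : α) : ℂ := ZMod.stdAddChar (e i)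

lemma ph_star (e : α → ZMod 3) (i : α) : star (ph e i) = ZMod.stdAddChar (-(e i)) := by
  rw [AddChar.map_neg_eq_conj]; rfl

lemma ph_mul_star (e : α → ZMod 3) (i : α) : ph e i * star (ph e i) = 1 := by
  rw [ph_star, ph, ← AddChar.map_add_eq_mul]; simp

lemma ph_sum (i j k l : α) :
    ∑ e : α → ZMod 3, ph e i * star (ph e j) * star (ph e k) * ph e l =
      if (i = j ∧ k = l) ∨ (i = k ∧ j = l) then (Fintype.card (α → ZMod 3) : ℂ) else 0 := by
  have hf : ∀ e : α → ZMod 3, ph e i * star (ph e j) * star (ph e k) * ph e l =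
      ZMod.stdAddChar (e i - e j - e k + e l) := by
    intro e
    rw [ph_star, ph_star, ph, ph, ← AddChar.map_add_eq_mul, ← AddChar.map_add_eq_mul,
      ← AddChar.map_add_eq_mul]
    congr 1; ring
  simp only [hf]
  split_ifs with h
  · have : ∀ e : α → ZMod 3, e i - e j - e k + e l = 0 := by
      intro e
      rcases h with ⟨rfl, rfl⟩ | ⟨rfl, rfl⟩ <;> ring
    simp [this]
  · have key : ∃ s : α → ZMod 3, s i - s j - s k + s l ≠ 0 := by
      by_cases hij : i = j
      · have hkl : k ≠ l := fun h' => h (Or.inl ⟨hij, h'⟩)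
        refine ⟨Pi.single l 1, ?_⟩
        subst hij
        simp [Pi.single_apply, hkl]
      · by_cases hik : i = k
        · have hjl : j ≠ l := fun h' => h (Or.inr ⟨hik, h'⟩)
          refine ⟨Pi.single l 1, ?_⟩
          subst hik
          simp [Pi.single_apply, hjl]
        · refine ⟨Pi.single i 1, ?_⟩
          by_cases hil : l = i
          · subst hil
            simp [Ne.symm hij, Ne.symm hik]; decide
          · simp [Ne.symm hij, Ne.symm hik, hil]
    obtain ⟨s, hs⟩ := key
    have h1 := Equiv.sum_comp (Equiv.addRight s)
      (fun e : α → ZMod 3 => (ZMod.stdAddChar (e i - e j - e k + e l) : ℂ))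
    simp only [Equiv.coe_addRight, Pi.add_apply] at h1
    have h2 : ∀ e : α → ZMod 3, (ZMod.stdAddChar ((e i + s i) - (e j + s j) - (e k + s k) +
        (e l + s l)) : ℂ) = ZMod.stdAddChar (s i - s j - s k + s l) *
          ZMod.stdAddChar (e i - e j - e k + e l) := by
      intro e; rw [← AddChar.map_add_eq_mul]; congr 1; ring
    simp only [h2] at h1
    rw [← Finset.mul_sum] at h1
    have h3 : (ZMod.stdAddChar (s i - s j - s k + s l) : ℂ) ≠ 1 := by
      intro h'
      apply hs
      apply ZMod.injective_stdAddChar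
      rw [h']; simp
    have h4 := sub_eq_zero.2 h1
    rw [← sub_one_mul] at h4
    exact (mul_eq_zero.1 h4).resolve_left (sub_ne_zero.2 h3)

lemma ph_avg (m : α → α → ℂ) :
    ∑ e : α → ZMod 3, ‖∑ i, ∑ j, ph e i * star (ph e j) * m i j‖ ^ 2 =
      (Fintype.card (α → ZMod 3) : ℝ) *
        (‖∑ i, m i i‖ ^ 2 + ∑ i, ∑ j, if i = j then 0 else ‖m i j‖ ^ 2) := by
  have hc : ((∑ e : α → ZMod 3, ‖∑ i, ∑ j, ph e i * star (ph e j) * m i j‖ ^ 2 : ℝ) : ℂ) =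
      ((Fintype.card (α → ZMod 3) : ℝ) *
        (‖∑ i, m i i‖ ^ 2 + ∑ i, ∑ j, if i = j then 0 else ‖m i j‖ ^ 2) : ℝ) := by
    have e1 : ∀ e : α → ZMod 3, ((‖∑ i, ∑ j, ph e i * star (ph e j) * m i j‖ ^ 2 : ℝ) : ℂ) =
        ∑ i, ∑ j, ∑ k, ∑ l, (m i j * star (m k l)) *
          (ph e i * star (ph e j) * star (ph e k) * ph e l) := by
      intro e
      rw [normsq_c, star_sum, Finset.sum_mul]
      refine Finset.sum_congr rfl fun i _ => ?_
      rw [Finset.sum_mul]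
      refine Finset.sum_congr rfl fun j _ => ?_
      rw [Finset.mul_sum]
      refine Finset.sum_congr rfl fun k _ => ?_
      rw [star_sum, Finset.mul_sum]
      refine Finset.sum_congr rfl fun l _ => ?_
      simp only [star_mul', star_star]; ring
    rw [Complex.ofReal_sum]
    simp only [e1]
    rw [Finset.sum_comm]
    have e2 : ∀ i, ∑ e : α → ZMod 3, ∑ j, ∑ k, ∑ l, (m i j * star (m k l)) *
          (ph e i * star (ph e j) * star (ph e k) * ph e l) =
        ∑ j, ∑ k, ∑ l, (m i j * star (m k l)) * (if (i = j ∧ k = l) ∨ (i = k ∧ j = l) then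
          (Fintype.card (α → ZMod 3) : ℂ) else 0) := by
      intro i
      rw [Finset.sum_comm]
      refine Finset.sum_congr rfl fun j _ => ?_
      rw [Finset.sum_comm]
      refine Finset.sum_congr rfl fun k _ => ?_
      rw [Finset.sum_comm]
      refine Finset.sum_congr rfl fun l _ => ?_
      rw [← Finset.mul_sum, ph_sum]
    simp only [e2]
    have e3 : ∀ i j, ∑ k, ∑ l, (m i j * star (m k l)) * (if (i = j ∧ k = l) ∨ (i = k ∧ j = l) then
          (Fintype.card (α → ZMod 3) : ℂ) else 0) = (Fintype.card (α → ZMod 3) : ℂ) *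
          ((if i = j then m i i * star (∑ k, m k k) else 0) +
            if i = j then 0 else ((‖m i j‖ ^ 2 : ℝ) : ℂ)) := by
      intro i j
      by_cases hij : i = j
      · subst hij
        have : ∀ k l, ((True ∧ k = l) ∨ (i = k ∧ i = l)) ↔ k = l := by
          intro k l; constructor
          · rintro (⟨_, h⟩ | ⟨h, h'⟩)
            · exact h
            · exact h.symm.trans h'
          · intro h; exact Or.inl ⟨trivial, h⟩
        simp only [if_true, eq_self_iff_true, this, mul_ite, mul_zero, Finset.sum_ite_eq, Finset.mem_univ, if_true, add_zero]
        rw [star_sum, Finset.mul_sum, Finset.mul_sum]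
        refine Finset.sum_congr rfl fun k _ => by ring
      · have : ∀ k l, ((i = j ∧ k = l) ∨ (i = k ∧ j = l)) ↔ (i = k ∧ j = l) := by
          intro k l; simp [hij]
        simp only [this, hij, if_false, zero_add, mul_ite, mul_zero]
        rw [Finset.sum_eq_single i, Finset.sum_eq_single j]
        · rw [normsq_c]; simp; ring
        · intro b _ hb; simp [Ne.symm hb]
        · simp
        · intro b _ hb; simp [Ne.symm hb]
        · simp
    simp only [e3, ← Finset.mul_sum]
    rw [Complex.ofReal_mul]
    congr 1
    rw [Complex.ofReal_add, normsq_c]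
    simp only [Finset.sum_add_distrib]
    congr 1
    · simp [Finset.sum_mul]
    · push_cast
      refine Finset.sum_congr rfl fun i _ => Finset.sum_congr rfl fun j _ => ?_
      split_ifs <;> simp
  exact_mod_cast hc

/-- a flat unitary -/
lemma exists_flat [Nonempty α] : ∃ F : Matrix α α ℂ, Fᴴ * F = 1 ∧ F * Fᴴ = 1 ∧
    ∀ i j, ‖F i j‖ ^ 2 = 1 / (Fintype.card α : ℝ) := by
  have : NeZero (Fintype.card α) := ⟨Fintype.card_ne_zero⟩
  set d := Fintype.card α with hd
  have hdpos : (0 : ℝ) < d := by exact_mod_cast Fintype.card_pos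
  let z : α ≃ ZMod d := Fintype.equivOfCardEq (by rw [ZMod.card])
  let F : Matrix α α ℂ := Matrix.of fun i j =>
    ((Real.sqrt d)⁻¹ : ℝ) * ZMod.stdAddChar (z i * z j)
  have hs : (((Real.sqrt d)⁻¹ : ℝ) : ℂ) * (((Real.sqrt d)⁻¹ : ℝ) : ℂ) = ((d : ℂ))⁻¹ := by
    rw [← Complex.ofReal_mul, ← mul_inv, Real.mul_self_sqrt hdpos.le]; simp
  have hF : Fᴴ * F = 1 := by
    ext i j
    rw [Matrix.mul_apply]
    have : ∀ k, Fᴴ i k * F k j = (d : ℂ)⁻¹ * ZMod.stdAddChar (z k * (z j - z i)) := by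
      intro k
      simp only [F, conjTranspose_apply, of_apply, star_mul', Complex.star_def, Complex.conj_ofReal]
      rw [← AddChar.map_neg_eq_conj]
      rw [mul_mul_mul_comm, hs, ← AddChar.map_add_eq_mul]
      congr 2; ring
    simp only [this, ← Finset.mul_sum]
    rw [z.sum_comp (fun k => (ZMod.stdAddChar (k * (z j - z i)) : ℂ)),
      AddChar.sum_mulShift _ (ZMod.isPrimitive_stdAddChar d)]
    simp only [sub_eq_zero, ZMod.card, Matrix.one_apply]
    by_cases h : i = j
    · subst h; simp
    · have : ¬ z j = z i := fun h' => h (z.injective h').symm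
      simp [h, this]
  refine ⟨F, hF, mul_eq_one_comm.1 hF, fun i j => ?_⟩
  simp only [F, of_apply, norm_mul, mul_pow]
  rw [ZMod.stdAddChar_apply, Circle.norm_coe]
  simp [Real.sq_sqrt hdpos.le]

lemma perm_avg (h : α → α → ℂ) {i j : α} (hij : i ≠ j) :
    ((Fintype.card α : ℂ) * (Fintype.card α - 1)) * ∑ π : Equiv.Perm α, h (π i) (π j) =
      Fintype.card (Equiv.Perm α) * ∑ x, ∑ y, if x = y then 0 else h x y := by
  have inv : ∀ x y, x ≠ y → ∑ π : Equiv.Perm α, h (π x) (π y) =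
      ∑ π : Equiv.Perm α, h (π i) (π j) := by
    intro x y hxy
    obtain ⟨g, hg1, hg2⟩ : ∃ g : Equiv.Perm α, g i = x ∧ g j = y := by
      refine ⟨(Equiv.swap (Equiv.swap i x j) y) * Equiv.swap i x, ?_, ?_⟩
      · simp only [Equiv.Perm.mul_apply, Equiv.swap_apply_left]
        apply Equiv.swap_apply_of_ne_of_ne
        · intro h'
          have := congrArg (Equiv.swap i x) h'
          simp at this; exact hij this
        · exact hxy
      · simp
    have := Equiv.sum_comp (Equiv.mulRight g) (fun π : Equiv.Perm α => h (π i) (π j))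
    rw [← this]
    simp [hg1, hg2]
  have h1 : ∑ x, ∑ y, (if x = y then 0 else ∑ π : Equiv.Perm α, h (π x) (π y)) =
      ((Fintype.card α : ℂ) * (Fintype.card α - 1)) * ∑ π : Equiv.Perm α, h (π i) (π j) := by
    have : ∀ x y, (if x = y then 0 else ∑ π : Equiv.Perm α, h (π x) (π y)) =
      (∑ π : Equiv.Perm α, h (π i) (π j)) -
        if x = y then ∑ π : Equiv.Perm α, h (π i) (π j) else 0 := by
      intro x y; split_ifs with hxy
      · simp
      · rw [inv x y hxy]; simp
    simp only [this, Finset.sum_sub_distrib, Finset.sum_const, Finset.sum_ite_eq, Finset.mem_univ,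
      if_true, Finset.card_univ, nsmul_eq_mul]
    ring
  rw [← h1]
  have h2 : ∀ x y, (if x = y then 0 else ∑ π : Equiv.Perm α, h (π x) (π y)) =
      ∑ π : Equiv.Perm α, (if π x = π y then 0 else h (π x) (π y)) := by
    intro x y
    by_cases hxy : x = y
    · simp [hxy]
    · simp [hxy]
  simp only [h2]
  have h3 : ∀ x, ∑ y, ∑ π : Equiv.Perm α, (if π x = π y then 0 else h (π x) (π y)) =
      ∑ π : Equiv.Perm α, ∑ y, (if π x = y then 0 else h (π x) y) := by
    intro x
    rw [Finset.sum_comm]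
    refine Finset.sum_congr rfl fun π _ => ?_
    exact Equiv.sum_comp π (fun y => if π x = y then 0 else h (π x) y)
  simp only [h3]
  rw [Finset.sum_comm]
  have h4 : ∀ π : Equiv.Perm α, ∑ x, ∑ y, (if π x = y then 0 else h (π x) y) =
      ∑ x, ∑ y, (if x = y then 0 else h x y) := by
    intro π
    exact Equiv.sum_comp π (fun x => ∑ y, (if x = y then 0 else h x y))
  simp [h4, Finset.sum_const]

end decoup

open Matrix
open scoped ComplexOrder
set_option linter.unusedSectionVars false

section decoup
variable {γ ω α : Type*} [Fintype γ] [DecidableEq γ] [Fintype ω] [DecidableEq ω]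
  [Fintype α] [DecidableEq α]

/-- partial trace over the first factor -/
noncomputable def ptr (Y : Matrix (γ × ω) (γ × ω) ℂ) : Matrix ω ω ℂ :=
  Matrix.of fun w w' => ∑ c, Y (c, w) (c, w')

/-- the quadratic form obtained after averaging over the outer phases -/
noncomputable def gOne (Y : Matrix (γ × ω) (γ × ω) ℂ) : ℝ :=
  ∑ w, ‖∑ c, Y (c, w) (c, w)‖ ^ 2 +
    ∑ c, ∑ w, ∑ w', if w = w' then 0 else ‖Y (c, w) (c, w')‖ ^ 2

lemma avg_outer (Y : Matrix (γ × ω) (γ × ω) ℂ) :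
    ∑ e : γ × ω → ZMod 3, N2 (ptr (diagonal (ph e) * Y * (diagonal (ph e))ᴴ)) =
      (Fintype.card (γ × ω → ZMod 3) : ℝ) * gOne Y := by
  have h0 : ∀ (e : γ × ω → ZMod 3) (w w' : ω),
      ptr (diagonal (ph e) * Y * (diagonal (ph e))ᴴ) w w' =
        ∑ x, ∑ y, ph e x * star (ph e y) *
          (if x.1 = y.1 ∧ x.2 = w ∧ y.2 = w' then Y x y else 0) := by
    intro e w w'
    simp only [ptr, of_apply, diagonal_conjTranspose, mul_diagonal, diagonal_mul, Pi.star_apply,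
      Fintype.sum_prod_type]
    refine Finset.sum_congr rfl fun c _ => ?_
    rw [Finset.sum_eq_single w, Finset.sum_eq_single c, Finset.sum_eq_single w']
    · simp; ring
    · intro b _ hb; simp [hb]
    · simp
    · intro b _ hb; simp [Ne.symm hb]
    · simp
    · intro b _ hb; simp [hb]
    · simp
  unfold N2
  simp only [h0]
  rw [Finset.sum_comm]
  have h1 : ∀ w, ∑ e : γ × ω → ZMod 3, ∑ w', ‖∑ x, ∑ y, ph e x * star (ph e y) *
          (if x.1 = y.1 ∧ x.2 = w ∧ y.2 = w' then Y x y else 0)‖ ^ 2 =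
      (Fintype.card (γ × ω → ZMod 3) : ℝ) * (‖∑ c, Y (c, w) (c, w)‖ ^ 2 +
        ∑ w', ∑ c, if w = w' then 0 else ‖Y (c, w) (c, w')‖ ^ 2) := by
    intro w
    rw [Finset.sum_comm]
    simp only [ph_avg, ← Finset.mul_sum, Finset.sum_add_distrib]
    congr 2
    · rw [Finset.sum_eq_single w]
      · congr 2
        rw [Fintype.sum_prod_type]
        refine Finset.sum_congr rfl fun c _ => ?_
        rw [Finset.sum_eq_single w]
        · simp
        · intro b _ hb; simp [hb]
        · simp
      · intro b _ hb
        have : ∀ x : γ × ω, ¬ (True ∧ x.2 = w ∧ x.2 = b) := by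
          rintro x ⟨_, h1, h2⟩; exact hb (h2.symm.trans h1)
        rw [Finset.sum_eq_zero]
        · simp
        · intro x _; rw [if_neg (this x)]
      · simp
    · refine Finset.sum_congr rfl fun w' _ => ?_
      rw [Fintype.sum_prod_type]
      refine Finset.sum_congr rfl fun c _ => ?_
      rw [Finset.sum_eq_single w, Fintype.sum_prod_type, Finset.sum_eq_single c,
        Finset.sum_eq_single w']
      · by_cases h : w = w' <;> simp [h]
      · intro b _ hb; simp [hb]
      · simp
      · intro b _ hb; simp [Ne.symm hb]
      · simp
      · intro b _ hb; simp [hb]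
      · simp
  simp only [h1, ← Finset.mul_sum, gOne, Finset.sum_add_distrib]
  congr 2
  conv_rhs => rw [Finset.sum_comm]
  refine Finset.sum_congr rfl fun w _ => ?_
  rw [Finset.sum_comm]

lemma avg_perm_norm (hd : 2 ≤ Fintype.card α) (h : α → α → ℝ) {i j : α} (hij : i ≠ j) :
    ∑ π : Equiv.Perm α, h (π i) (π j) = (Fintype.card (Equiv.Perm α) : ℝ) *
      ((∑ x, ∑ y, if x = y then 0 else h x y) /
        ((Fintype.card α : ℝ) * (Fintype.card α - 1))) := by
  have h1 := perm_avg (fun x y => (h x y : ℂ)) hij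
  have h2 : ((Fintype.card α : ℝ) * (Fintype.card α - 1)) * ∑ π : Equiv.Perm α, h (π i) (π j) =
      Fintype.card (Equiv.Perm α) * ∑ x, ∑ y, if x = y then 0 else h x y := by
    have : ∀ x y, ((if x = y then (0 : ℝ) else h x y : ℝ) : ℂ) = if x = y then 0 else (h x y : ℂ) := by
      intro x y; split_ifs <;> simp
    apply Complex.ofReal_injective
    push_cast
    simp only [this]
    exact h1
  have h3 : (2 : ℝ) ≤ Fintype.card α := by exact_mod_cast hd
  have h4 : (Fintype.card α : ℝ) * (Fintype.card α - 1) ≠ 0 := by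
    apply mul_ne_zero <;> linarith
  rw [mul_div_assoc', eq_div_iff h4, ← h2]; ring

lemma avg_perm_vec (hd : 2 ≤ Fintype.card α) (b : α → ℂ) (hb : ∑ i, b i = 0)
    (hn : ∀ i, ‖b i‖ ^ 2 = 1 / (Fintype.card α : ℝ) ^ 2) (x : α → ℂ) :
    ∑ π : Equiv.Perm α, ‖∑ i, b (π i) * x i‖ ^ 2 ≤ (Fintype.card (Equiv.Perm α) : ℝ) *
      ((∑ i, ‖x i‖ ^ 2) / ((Fintype.card α : ℝ) * (Fintype.card α - 1))) := by
  set d : ℝ := (Fintype.card α : ℝ) with hdd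
  have h3 : (2 : ℝ) ≤ d := by rw [hdd]; exact_mod_cast hd
  set P : ℝ := (Fintype.card (Equiv.Perm α) : ℝ) with hP
  have hoff : ∀ i j, i ≠ j → ∑ π : Equiv.Perm α, b (π i) * star (b (π j)) =
      ((P * (-(1 / d) / (d * (d - 1))) : ℝ) : ℂ) := by
    intro i j hij
    have h1 := perm_avg (fun x y => b x * star (b y)) hij
    have h2 : ∑ x, ∑ y, (if x = y then 0 else b x * star (b y)) = ((-(1 / d) : ℝ) : ℂ) := by
      have : ∀ x y, (if x = y then 0 else b x * star (b y)) =
          b x * star (b y) - if x = y then b x * star (b x) else 0 := by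
        intro x y; split_ifs with h
        · subst h; simp
        · simp
      simp only [this, Finset.sum_sub_distrib, ← Finset.mul_sum, ← star_sum, hb]
      simp only [Finset.sum_ite_eq, Finset.mem_univ, if_true, ← normsq_c, hn]
      simp only [star_zero, mul_zero, Finset.sum_const_zero, zero_sub, Finset.sum_const,
        Finset.card_univ, nsmul_eq_mul, Complex.ofReal_neg]
      congr 1
      rw [← Complex.ofReal_natCast, ← Complex.ofReal_mul]
      congr 1
      rw [← hdd]; field_simp
    rw [h2] at h1
    have h4 : (((d * (d - 1) : ℝ)) : ℂ) ≠ 0 := by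
      rw [Complex.ofReal_ne_zero]; apply mul_ne_zero <;> linarith
    have h5 : ((d * (d - 1) : ℝ) : ℂ) * ∑ π : Equiv.Perm α, b (π i) * star (b (π j)) =
        (P : ℂ) * ((-(1 / d) : ℝ) : ℂ) := by
      rw [hP, Complex.ofReal_natCast, ← h1, hdd]; push_cast; ring
    rw [mul_div_assoc', Complex.ofReal_div, eq_div_iff h4, mul_comm, h5]
    push_cast; ring
  have hdiag : ∀ i, ∑ π : Equiv.Perm α, b (π i) * star (b (π i)) = ((P * (1 / d ^ 2) : ℝ) : ℂ) := by
    intro i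
    simp only [← normsq_c, hn]
    simp [hP]
  have hex : ((∑ π : Equiv.Perm α, ‖∑ i, b (π i) * x i‖ ^ 2 : ℝ) : ℂ) =
      ((P * (1 / d ^ 2) * ∑ i, ‖x i‖ ^ 2 + (P * (-(1 / d) / (d * (d - 1)))) *
        (‖∑ i, x i‖ ^ 2 - ∑ i, ‖x i‖ ^ 2) : ℝ) : ℂ) := by
    have e1 : ∀ π : Equiv.Perm α, ((‖∑ i, b (π i) * x i‖ ^ 2 : ℝ) : ℂ) =
        ∑ i, ∑ j, (x i * star (x j)) * (b (π i) * star (b (π j))) := by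
      intro π
      rw [normsq_c, star_sum, Finset.sum_mul]
      refine Finset.sum_congr rfl fun i _ => ?_
      rw [Finset.mul_sum]
      refine Finset.sum_congr rfl fun j _ => ?_
      simp only [star_mul']; ring
    rw [Complex.ofReal_sum]
    simp only [e1]
    rw [Finset.sum_comm]
    have e2 : ∀ i, ∑ π : Equiv.Perm α, ∑ j, (x i * star (x j)) * (b (π i) * star (b (π j))) =
        ∑ j, ((x i * star (x j)) * ((P * (-(1 / d) / (d * (d - 1))) : ℝ) : ℂ) +
          if i = j then (x i * star (x i)) * ((P * (1 / d ^ 2) : ℝ) -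
            (P * (-(1 / d) / (d * (d - 1))) : ℝ) : ℂ) else 0) := by
      intro i
      rw [Finset.sum_comm]
      refine Finset.sum_congr rfl fun j _ => ?_
      rw [← Finset.mul_sum]
      by_cases hij : i = j
      · subst hij; rw [hdiag, if_pos rfl]; ring
      · rw [hoff i j hij, if_neg hij, add_zero]
    simp only [e2, Finset.sum_add_distrib, Finset.sum_ite_eq, Finset.mem_univ, if_true,
      ← Finset.sum_mul, ← Finset.mul_sum, ← star_sum, ← normsq_c]
    push_cast
    ring
  have hex' := Complex.ofReal_injective hex
  rw [hex']
  have hs : 0 ≤ ‖∑ i, x i‖ ^ 2 := by positivity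
  have hPn : 0 ≤ P := by positivity
  have : P * (1 / d ^ 2) * ∑ i, ‖x i‖ ^ 2 + (P * (-(1 / d) / (d * (d - 1)))) *
        (‖∑ i, x i‖ ^ 2 - ∑ i, ‖x i‖ ^ 2) = P * ((∑ i, ‖x i‖ ^ 2) / (d * (d - 1))) -
        P * ((1 / d) / (d * (d - 1))) * ‖∑ i, x i‖ ^ 2 := by
    have : d - 1 ≠ 0 := by linarith
    have : d ≠ 0 := by linarith
    field_simp
    ring
  rw [this]
  have : 0 ≤ P * ((1 / d) / (d * (d - 1))) * ‖∑ i, x i‖ ^ 2 := by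
    have : 0 < d - 1 := by linarith
    positivity
  linarith

end decoup

open Matrix
open scoped ComplexOrder
set_option linter.unusedSectionVars false

section decoup
variable {γ ω α : Type*} [Fintype γ] [DecidableEq γ] [Fintype ω] [DecidableEq ω]
  [Fintype α] [DecidableEq α]

noncomputable def aF (F : Matrix (γ × ω) (γ × ω) ℂ) (w : ω) (i j : γ × ω) : ℂ :=
  ∑ c, F (c, w) i * star (F (c, w) j)

noncomputable def Yf (F : Matrix (γ × ω) (γ × ω) ℂ) (π : Equiv.Perm (γ × ω))
    (e : γ × ω → ZMod 3) (X : Matrix (γ × ω) (γ × ω) ℂ) : Matrix (γ × ω) (γ × ω) ℂ :=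
  Matrix.of fun x y => ∑ i, ∑ j, ph e i * star (ph e j) * (F x (π i) * star (F y (π j)) * X i j)

lemma Yf_eq (F : Matrix (γ × ω) (γ × ω) ℂ) (π : Equiv.Perm (γ × ω))
    (e : γ × ω → ZMod 3) (X : Matrix (γ × ω) (γ × ω) ℂ) :
    Yf F π e X = (F.submatrix id π * diagonal (ph e)) * X * (F.submatrix id π * diagonal (ph e))ᴴ := by
  have hG : ∀ x i, (F.submatrix id π * diagonal (ph e)) x i = F x (π i) * ph e i := by
    intro x i; rw [mul_diagonal]; rfl
  ext x y
  rw [Matrix.mul_apply]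
  simp only [Yf, of_apply, conjTranspose_apply, hG]
  simp only [mul_apply (M := F.submatrix id π * diagonal (ph e)), hG, Finset.sum_mul, star_mul']
  rw [Finset.sum_comm]
  refine Finset.sum_congr rfl fun i _ => Finset.sum_congr rfl fun j _ => ?_
  ring

lemma avg_e (F : Matrix (γ × ω) (γ × ω) ℂ) (π : Equiv.Perm (γ × ω))
    (X : Matrix (γ × ω) (γ × ω) ℂ) :
    ∑ e : γ × ω → ZMod 3, gOne (Yf F π e X) = (Fintype.card (γ × ω → ZMod 3) : ℝ) *
      (∑ w, (‖∑ i, aF F w (π i) (π i) * X i i‖ ^ 2 +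
        ∑ i, ∑ j, if i = j then 0 else ‖aF F w (π i) (π j)‖ ^ 2 * ‖X i j‖ ^ 2) +
      ∑ c, ∑ w, ∑ w', if w = w' then 0 else
        (‖∑ i, (F (c, w) (π i) * star (F (c, w') (π i))) * X i i‖ ^ 2 +
        ∑ i, ∑ j, if i = j then 0 else
          ‖F (c, w) (π i)‖ ^ 2 * ‖F (c, w') (π j)‖ ^ 2 * ‖X i j‖ ^ 2)) := by
  have h1 : ∀ (e : γ × ω → ZMod 3) (w : ω), ∑ c, Yf F π e X (c, w) (c, w) =
      ∑ i, ∑ j, ph e i * star (ph e j) * (aF F w (π i) (π j) * X i j) := by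
    intro e w
    simp only [Yf, of_apply, aF, Finset.sum_mul, Finset.mul_sum]
    rw [Finset.sum_comm]
    refine Finset.sum_congr rfl fun i _ => ?_
    rw [Finset.sum_comm]
  have h2 : ∀ (e : γ × ω → ZMod 3) (c : γ) (w w' : ω), Yf F π e X (c, w) (c, w') =
      ∑ i, ∑ j, ph e i * star (ph e j) * (F (c, w) (π i) * star (F (c, w') (π j)) * X i j) := by
    intro e c w w'; rfl
  simp only [gOne, h1]
  simp only [h2]
  rw [Finset.sum_add_distrib]
  rw [Finset.sum_comm, mul_add]
  congr 1
  · simp only [ph_avg, ← Finset.mul_sum, norm_mul, mul_pow, Finset.sum_add_distrib]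
  · rw [Finset.sum_comm, Finset.mul_sum]
    refine Finset.sum_congr rfl fun c _ => ?_
    rw [Finset.sum_comm, Finset.mul_sum]
    refine Finset.sum_congr rfl fun w _ => ?_
    rw [Finset.sum_comm, Finset.mul_sum]
    refine Finset.sum_congr rfl fun w' _ => ?_
    split_ifs
    · simp
    · rw [ph_avg]
      simp only [norm_mul, mul_pow, norm_star]

lemma aF_diag {F : Matrix (γ × ω) (γ × ω) ℂ} [Nonempty γ] [Nonempty ω]
    (hF : ∀ i j, ‖F i j‖ ^ 2 = 1 / (Fintype.card (γ × ω) : ℝ)) (w : ω) (i : γ × ω) :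
    aF F w i i = ((1 / Fintype.card ω : ℝ) : ℂ) := by
  have hc : (Fintype.card γ : ℝ) ≠ 0 := by exact_mod_cast Fintype.card_ne_zero
  simp only [aF, ← normsq_c, hF]
  rw [← Complex.ofReal_sum]
  congr 1
  simp [Fintype.card_prod]
  field_simp

lemma aF_sum {F : Matrix (γ × ω) (γ × ω) ℂ} [Nonempty γ] [Nonempty ω]
    (hu : F * Fᴴ = 1)
    (hF : ∀ i j, ‖F i j‖ ^ 2 = 1 / (Fintype.card (γ × ω) : ℝ)) (w : ω) :
    (∑ x, ∑ y, if x = y then 0 else ‖aF F w x y‖ ^ 2) =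
      (Fintype.card γ : ℝ) - Fintype.card γ / Fintype.card ω := by
  have hw : (Fintype.card ω : ℝ) ≠ 0 := by exact_mod_cast Fintype.card_ne_zero
  have h1 : ∀ x y, (if x = y then 0 else ‖aF F w x y‖ ^ 2) =
      ‖aF F w x y‖ ^ 2 - if x = y then (1 / Fintype.card ω : ℝ) ^ 2 else 0 := by
    intro x y
    split_ifs with h
    · subst h; rw [aF_diag hF, Complex.norm_real]; simp
    · simp
  simp only [h1, Finset.sum_sub_distrib, Finset.sum_ite_eq, Finset.mem_univ, if_true]
  congr 1
  · let G : Matrix γ (γ × ω) ℂ := Matrix.of fun c i => F (c, w) i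
    have hG : G * Gᴴ = 1 := by
      ext c c'
      have := congrFun (congrFun hu (c, w)) (c', w)
      rw [mul_apply] at this ⊢
      simp only [conjTranspose_apply, one_apply, Prod.mk.injEq, and_true] at this ⊢
      exact this
    have h2 : ∑ x, ∑ y, ‖aF F w x y‖ ^ 2 = N2 (Gᴴ * G) := by
      unfold N2
      rw [Finset.sum_comm]
      refine Finset.sum_congr rfl fun x _ => Finset.sum_congr rfl fun y _ => ?_
      congr 2
      simp only [aF, mul_apply, conjTranspose_apply, G, of_apply]
      refine Finset.sum_congr rfl fun i _ => ?_
      ring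
    rw [h2, N2_eq_re]
    have h3 : (Gᴴ * G)ᴴ * (Gᴴ * G) = Gᴴ * G := by
      rw [conjTranspose_mul, conjTranspose_conjTranspose, Matrix.mul_assoc, ← Matrix.mul_assoc G,
        hG, Matrix.one_mul]
    rw [h3, trace_mul_comm, hG]
    simp
  · simp [Fintype.card_prod]; field_simp

lemma avg_all (F : Matrix (γ × ω) (γ × ω) ℂ) [Nonempty γ] [Nonempty ω]
    (hd : 2 ≤ Fintype.card (γ × ω)) (hu : F * Fᴴ = 1)
    (hF : ∀ i j, ‖F i j‖ ^ 2 = 1 / (Fintype.card (γ × ω) : ℝ))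
    (X : Matrix (γ × ω) (γ × ω) ℂ) :
    ∑ π : Equiv.Perm (γ × ω), ∑ e : γ × ω → ZMod 3, gOne (Yf F π e X) ≤
      (Fintype.card (Equiv.Perm (γ × ω)) : ℝ) * ((Fintype.card (γ × ω → ZMod 3) : ℝ) *
      (N2 X / Fintype.card γ + ‖X.trace‖ ^ 2 / Fintype.card ω)) := by
  have hcw : (Fintype.card (γ × ω) : ℝ) = Fintype.card γ * Fintype.card ω := by
    simp [Fintype.card_prod]
  have hd' : (2 : ℝ) ≤ Fintype.card (γ × ω) := by exact_mod_cast hd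
  have hc1 : (1 : ℝ) ≤ Fintype.card γ := by exact_mod_cast Fintype.card_pos
  have hw1 : (1 : ℝ) ≤ Fintype.card ω := by exact_mod_cast Fintype.card_pos
  set d : ℝ := (Fintype.card (γ × ω) : ℝ) with hdd
  set c : ℝ := (Fintype.card γ : ℝ) with hcc
  set w : ℝ := (Fintype.card ω : ℝ) with hww
  set P : ℝ := (Fintype.card (Equiv.Perm (γ × ω)) : ℝ) with hP
  have hP0 : 0 ≤ P := by positivity
  set Dg : ℝ := ∑ i, ‖X i i‖ ^ 2 with hDg
  set O : ℝ := ∑ i, ∑ j, if i = j then 0 else ‖X i j‖ ^ 2 with hO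
  have hDg0 : 0 ≤ Dg := by positivity
  have hO0 : 0 ≤ O := by
    rw [hO]; exact Finset.sum_nonneg fun i _ => Finset.sum_nonneg fun j _ => by split_ifs <;> positivity
  have hN : N2 X = Dg + O := by
    rw [hDg, hO, N2, ← Finset.sum_add_distrib]
    refine Finset.sum_congr rfl fun i _ => ?_
    have : ∀ j, ‖X i j‖ ^ 2 = (if i = j then ‖X i i‖ ^ 2 else 0) + if i = j then 0 else ‖X i j‖ ^ 2 := by
      intro j; split_ifs with h
      · subst h; simp
      · simp
    rw [Finset.sum_congr rfl fun j _ => this j, Finset.sum_add_distrib]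
    simp
  simp only [avg_e, ← Finset.mul_sum]
  rw [mul_left_comm]
  apply mul_le_mul_of_nonneg_left _ (by positivity)
  rw [Finset.sum_add_distrib]
  -- first part
  have p1 : ∑ π : Equiv.Perm (γ × ω), ∑ w0, (‖∑ i, aF F w0 (π i) (π i) * X i i‖ ^ 2 +
        ∑ i, ∑ j, if i = j then 0 else ‖aF F w0 (π i) (π j)‖ ^ 2 * ‖X i j‖ ^ 2) =
      P * (‖X.trace‖ ^ 2 / w + (d - c) / (d * (d - 1)) * O) := by
    rw [Finset.sum_comm]
    have : ∀ w0, ∑ π : Equiv.Perm (γ × ω), (‖∑ i, aF F w0 (π i) (π i) * X i i‖ ^ 2 +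
        ∑ i, ∑ j, if i = j then 0 else ‖aF F w0 (π i) (π j)‖ ^ 2 * ‖X i j‖ ^ 2) =
        P * (‖X.trace‖ ^ 2 / w ^ 2 + (c - c / w) / (d * (d - 1)) * O) := by
      intro w0
      rw [Finset.sum_add_distrib, mul_add]
      congr 1
      · simp only [aF_diag hF, ← Finset.mul_sum]
        have : ∑ i, X i i = X.trace := rfl
        simp only [this, norm_mul, Complex.norm_real, mul_pow, Finset.sum_const, Finset.card_univ,
          nsmul_eq_mul, Real.norm_eq_abs, sq_abs, ← hP, ← hww]
        field_simp
      · rw [Finset.sum_comm, hO, Finset.mul_sum, Finset.mul_sum]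
        refine Finset.sum_congr rfl fun i _ => ?_
        rw [Finset.sum_comm, Finset.mul_sum, Finset.mul_sum]
        refine Finset.sum_congr rfl fun j _ => ?_
        split_ifs with h
        · simp
        · rw [← Finset.sum_mul, avg_perm_norm hd (fun x y => ‖aF F w0 x y‖ ^ 2) h, aF_sum hu hF]
          ring
    simp only [this, Finset.sum_const, Finset.card_univ, nsmul_eq_mul, ← hww]
    rw [hcw]
    have : w ≠ 0 := by linarith
    have : c ≠ 0 := by linarith
    have : c * w - 1 ≠ 0 := by linarith
    field_simp
  have p2 : ∑ π : Equiv.Perm (γ × ω), ∑ c0, ∑ w0, ∑ w1, (if w0 = w1 then 0 else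
        (‖∑ i, (F (c0, w0) (π i) * star (F (c0, w1) (π i))) * X i i‖ ^ 2 +
        ∑ i, ∑ j, if i = j then 0 else
          ‖F (c0, w0) (π i)‖ ^ 2 * ‖F (c0, w1) (π j)‖ ^ 2 * ‖X i j‖ ^ 2)) ≤
      P * ((c * (w * (w - 1))) * (Dg / (d * (d - 1)) + O / d ^ 2)) := by
    have hk : ∀ c0 w0 w1, ∑ π : Equiv.Perm (γ × ω), (if w0 = w1 then 0 else
        (‖∑ i, (F (c0, w0) (π i) * star (F (c0, w1) (π i))) * X i i‖ ^ 2 +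
        ∑ i, ∑ j, if i = j then 0 else
          ‖F (c0, w0) (π i)‖ ^ 2 * ‖F (c0, w1) (π j)‖ ^ 2 * ‖X i j‖ ^ 2)) ≤
        P * (Dg / (d * (d - 1)) + O / d ^ 2) -
          if w0 = w1 then P * (Dg / (d * (d - 1)) + O / d ^ 2) else 0 := by
      intro c0 w0 w1
      split_ifs with h
      · simp
      · rw [Finset.sum_add_distrib, sub_zero, mul_add]
        apply add_le_add
        · refine avg_perm_vec hd (fun i => F (c0, w0) i * star (F (c0, w1) i)) ?_ ?_ (fun i => X i i)
          · have := congrFun (congrFun hu (c0, w0)) (c0, w1)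
            rw [mul_apply] at this
            simpa [one_apply, h] using this
          · intro i
            rw [norm_mul, mul_pow, norm_star, hF, hF]; ring
        · simp only [hF]
          rw [Finset.sum_const, Finset.card_univ, nsmul_eq_mul]
          apply mul_le_mul_of_nonneg_left _ hP0
          rw [hO, Finset.sum_div]
          refine Finset.sum_le_sum fun i _ => ?_
          rw [Finset.sum_div]
          refine Finset.sum_le_sum fun j _ => ?_
          split_ifs
          · simp
          · apply le_of_eq; ring
    rw [Finset.sum_comm]
    have : ∀ c0 ∈ (Finset.univ : Finset γ), ∑ π : Equiv.Perm (γ × ω), ∑ w0, ∑ w1, (if w0 = w1 then 0 else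
        (‖∑ i, (F (c0, w0) (π i) * star (F (c0, w1) (π i))) * X i i‖ ^ 2 +
        ∑ i, ∑ j, if i = j then 0 else
          ‖F (c0, w0) (π i)‖ ^ 2 * ‖F (c0, w1) (π j)‖ ^ 2 * ‖X i j‖ ^ 2)) ≤
        P * ((w * (w - 1)) * (Dg / (d * (d - 1)) + O / d ^ 2)) := by
      intro c0 _
      rw [Finset.sum_comm]
      have : ∀ w0 ∈ (Finset.univ : Finset ω), ∑ π : Equiv.Perm (γ × ω), ∑ w1, (if w0 = w1 then 0 else
        (‖∑ i, (F (c0, w0) (π i) * star (F (c0, w1) (π i))) * X i i‖ ^ 2 +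
        ∑ i, ∑ j, if i = j then 0 else
          ‖F (c0, w0) (π i)‖ ^ 2 * ‖F (c0, w1) (π j)‖ ^ 2 * ‖X i j‖ ^ 2)) ≤
        P * (((w - 1)) * (Dg / (d * (d - 1)) + O / d ^ 2)) := by
        intro w0 _
        rw [Finset.sum_comm]
        refine (Finset.sum_le_sum fun w1 _ => hk c0 w0 w1).trans ?_
        simp only [Finset.sum_sub_distrib, Finset.sum_ite_eq, Finset.mem_univ, if_true,
          Finset.sum_const, Finset.card_univ, nsmul_eq_mul, ← hww]
        apply le_of_eq; ring
      refine (Finset.sum_le_sum this).trans ?_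
      simp only [Finset.sum_const, Finset.card_univ, nsmul_eq_mul, ← hww]
      apply le_of_eq; ring
    refine (Finset.sum_le_sum this).trans ?_
    simp only [Finset.sum_const, Finset.card_univ, nsmul_eq_mul, ← hcc]
    apply le_of_eq; ring
  rw [p1]
  refine (add_le_add le_rfl p2).trans ?_
  rw [← mul_add]
  apply mul_le_mul_of_nonneg_left _ hP0
  rw [hN]
  have hd1 : 0 < d - 1 := by linarith
  have k1 : (c * (w * (w - 1))) * (Dg / (d * (d - 1))) ≤ Dg / c := by
    have : (c * (w * (w - 1))) * (Dg / (d * (d - 1))) = Dg * ((w - 1) / (d - 1)) := by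
      rw [hcw] at hd1 ⊢
      field_simp
    rw [this, div_eq_mul_one_div Dg c]
    apply mul_le_mul_of_nonneg_left _ hDg0
    rw [div_le_div_iff₀ hd1 (by linarith), hcw]
    nlinarith
  have k2 : (d - c) / (d * (d - 1)) * O + (c * (w * (w - 1))) * (O / d ^ 2) ≤ O / c := by
    have : (d - c) / (d * (d - 1)) * O + (c * (w * (w - 1))) * (O / d ^ 2) =
        O * ((w - 1) / (w * (d - 1)) + (w - 1) / (c * w)) := by
      rw [hcw] at hd1 ⊢
      field_simp
    rw [this, div_eq_mul_one_div O c]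
    apply mul_le_mul_of_nonneg_left _ hO0
    have : (w - 1) / (w * (d - 1)) ≤ 1 / (c * w) := by
      rw [div_le_div_iff₀ (by positivity) (by positivity), hcw]
      nlinarith
    have h4 : 1 / (c * w) + (w - 1) / (c * w) = 1 / c := by field_simp; ring
    linarith
  have : (Dg + O) / c = Dg / c + O / c := add_div _ _ _
  rw [this]
  linarith

lemma exists_le_avg {ι : Type*} [Fintype ι] [Nonempty ι] (f : ι → ℝ) (b : ℝ)
    (h : ∑ i, f i ≤ (Fintype.card ι : ℝ) * b) : ∃ i, f i ≤ b := by
  by_contra hc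
  push Not at hc
  have : ∑ _i : ι, b < ∑ i, f i :=
    Finset.sum_lt_sum_of_nonempty Finset.univ_nonempty fun i _ => hc i
  simp at this
  linarith

lemma decouple1 {K : Type*} [Fintype K] [Nonempty γ] [Nonempty ω] (t : K → ℝ) (ht : ∀ k, 0 ≤ t k)
    (X : K → Matrix (γ × ω) (γ × ω) ℂ) :
    ∃ U : Matrix (γ × ω) (γ × ω) ℂ, Uᴴ * U = 1 ∧
      ∑ k, t k * N2 (ptr (U * X k * Uᴴ)) ≤
        ∑ k, t k * (N2 (X k) / Fintype.card γ + ‖(X k).trace‖ ^ 2 / Fintype.card ω) := by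
  have hc1 : 1 ≤ Fintype.card γ := Fintype.card_pos
  have hw1 : 1 ≤ Fintype.card ω := Fintype.card_pos
  by_cases hd : 2 ≤ Fintype.card (γ × ω)
  · obtain ⟨F, hF1, hF2, hF3⟩ := exists_flat (α := γ × ω)
    obtain ⟨⟨π, e⟩, h1⟩ : ∃ p : Equiv.Perm (γ × ω) × (γ × ω → ZMod 3),
        ∑ k, t k * gOne (Yf F p.1 p.2 (X k)) ≤
        ∑ k, t k * (N2 (X k) / Fintype.card γ + ‖(X k).trace‖ ^ 2 / Fintype.card ω) := by
      apply exists_le_avg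
      rw [Finset.sum_comm, Finset.mul_sum]
      refine Finset.sum_le_sum fun k _ => ?_
      rw [← Finset.mul_sum, Fintype.sum_prod_type, mul_left_comm]
      apply mul_le_mul_of_nonneg_left _ (ht k)
      refine (avg_all F hd hF2 hF3 (X k)).trans (le_of_eq ?_)
      rw [Fintype.card_prod (Equiv.Perm (γ × ω))]; push_cast; ring
    obtain ⟨e', h2⟩ : ∃ e' : γ × ω → ZMod 3,
        ∑ k, t k * N2 (ptr (diagonal (ph e') * Yf F π e (X k) * (diagonal (ph e'))ᴴ)) ≤
        ∑ k, t k * gOne (Yf F π e (X k)) := by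
      apply exists_le_avg
      rw [Finset.sum_comm, Finset.mul_sum]
      refine Finset.sum_le_sum fun k _ => ?_
      rw [← Finset.mul_sum, avg_outer, mul_left_comm]
    have hph : ∀ e : γ × ω → ZMod 3, (diagonal (ph e))ᴴ * diagonal (ph e) = 1 := by
      intro e
      rw [diagonal_conjTranspose, diagonal_mul_diagonal, ← diagonal_one]
      congr 1; ext i
      rw [Pi.star_apply, mul_comm, ph_mul_star]
    have hFp : (F.submatrix id π)ᴴ * F.submatrix id π = 1 := by
      rw [conjTranspose_submatrix, submatrix_mul _ _ _ _ _ Function.bijective_id |>.symm, hF1]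
      exact submatrix_one_equiv π
    refine ⟨diagonal (ph e') * (F.submatrix id π * diagonal (ph e)), ?_, ?_⟩
    · rw [conjTranspose_mul, Matrix.mul_assoc, ← Matrix.mul_assoc _ (diagonal (ph e')), hph,
        Matrix.one_mul, conjTranspose_mul, Matrix.mul_assoc, ← Matrix.mul_assoc _ (F.submatrix id π),
        hFp, Matrix.one_mul, hph]
    · refine le_trans (le_of_eq ?_) (h2.trans h1)
      refine Finset.sum_congr rfl fun k _ => ?_
      rw [Yf_eq, conjTranspose_mul (diagonal (ph e'))]
      simp only [Matrix.mul_assoc]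
  · refine ⟨1, by simp, ?_⟩
    rw [Fintype.card_prod] at hd
    have hc : Fintype.card γ = 1 := by nlinarith
    have hw : Fintype.card ω = 1 := by nlinarith
    refine Finset.sum_le_sum fun k _ => mul_le_mul_of_nonneg_left ?_ (ht k)
    obtain ⟨c0, hc0⟩ := Fintype.card_eq_one_iff.mp hc
    have : N2 (ptr (X k)) ≤ N2 (X k) := by
      have : Unique γ := ⟨⟨c0⟩, hc0⟩
      unfold N2 ptr
      simp only [Fintype.sum_prod_type, of_apply, Fintype.sum_unique]
      exact le_rfl
    simp only [conjTranspose_one, Matrix.one_mul, Matrix.mul_one, hc, hw, Nat.cast_one, div_one]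
    have := sq_nonneg ‖(X k).trace‖
    linarith

end decoup

open Matrix
open scoped ComplexOrder
open scoped Kronecker
set_option linter.unusedSectionVars false

section two
variable {γA ωA γB ωB ρ : Type*} [Fintype γA] [DecidableEq γA] [Fintype ωA] [DecidableEq ωA]
  [Fintype γB] [DecidableEq γB] [Fintype ωB] [DecidableEq ωB] [Fintype ρ] [DecidableEq ρ]
  {α β : Type*} [Fintype α] [DecidableEq α] [Fintype β] [DecidableEq β]

/-- reshaping of the encoded vector -/
def reN (Ω : ρ × ((γA × ωA) × (γB × ωB)) → ℂ) : Matrix (γA × γB) (ρ × (ωA × ωB)) ℂ :=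
  Matrix.of fun p q => Ω (q.1, ((p.1, q.2.1), (p.2, q.2.2)))

def mB (χ : ρ × (α × β) → ℂ) : Matrix (ρ × α) β ℂ := Matrix.of fun p b => χ (p.1, (p.2, b))
def mA (χ : ρ × (α × β) → ℂ) : Matrix (ρ × β) α ℂ := Matrix.of fun p a => χ (p.1, (a, p.2))
def mR (χ : ρ × (α × β) → ℂ) : Matrix ρ (α × β) ℂ := Matrix.of fun r p => χ (r, p)

noncomputable def nsq {i : Type*} [Fintype i] (v : i → ℂ) : ℝ := ∑ x, ‖v x‖ ^ 2

lemma rank1 {m n : Type*} [Fintype m] [Fintype n] (U : Matrix m n ℂ) (f g : n → ℂ) :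
    U * vecMulVec f (star g) * Uᴴ = vecMulVec (U *ᵥ f) (star (U *ᵥ g)) := by
  rw [mul_vecMulVec, vecMulVec_mul, star_mulVec]

lemma kron_apply2 (UA : Matrix α α ℂ) (UB : Matrix β β ℂ) (χ : ρ × (α × β) → ℂ) (r : ρ) (x : α)
    (y : β) : (((1 : Matrix ρ ρ ℂ) ⊗ₖ (UA ⊗ₖ UB)) *ᵥ χ) (r, (x, y)) =
      (UA *ᵥ fun i => (UB *ᵥ fun j => χ (r, (i, j))) y) x := by
  simp only [mulVec, dotProduct, Fintype.sum_prod_type, kroneckerMap_apply, one_apply]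
  rw [Finset.sum_eq_single r]
  · simp only [if_true, one_mul, Finset.mul_sum]
    refine Finset.sum_congr rfl fun i _ => Finset.sum_congr rfl fun j _ => ?_
    ring
  · intro b _ hb; simp [Ne.symm hb]
  · simp

lemma sum_norm_star {a : Type*} (s : Finset a) (f g : a → ℂ) :
    ‖∑ x ∈ s, star (f x) * g x‖ = ‖∑ x ∈ s, f x * star (g x)‖ := by
  rw [← norm_star, star_sum]
  simp

lemma sum_reorder6 {a b c d e g : Type*} [Fintype a] [Fintype b] [Fintype c] [Fintype d]
    [Fintype e] [Fintype g] (f : a → b → c → d → e → g → ℝ) :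
    ∑ r, ∑ w, ∑ v, ∑ r', ∑ w', ∑ v', f r w v r' w' v' =
      ∑ r, ∑ r', ∑ v, ∑ v', ∑ w, ∑ w', f r w v r' w' v' := by
  refine Finset.sum_congr rfl fun r _ => ?_
  have h1 : ∑ w, ∑ v, ∑ r', ∑ w', ∑ v', f r w v r' w' v' =
      ∑ p : b × c × d × e × g, f r p.1 p.2.1 p.2.2.1 p.2.2.2.1 p.2.2.2.2 := by
    simp only [Fintype.sum_prod_type]
  have h2 : ∑ r', ∑ v, ∑ v', ∑ w, ∑ w', f r w v r' w' v' =
      ∑ p : d × c × g × b × e, f r p.2.2.2.1 p.2.1 p.1 p.2.2.2.2 p.2.2.1 := by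
    simp only [Fintype.sum_prod_type]
  rw [h1, h2]
  exact Fintype.sum_equiv
    ⟨fun p => (p.2.2.1, p.2.1, p.2.2.2.2, p.1, p.2.2.2.1),
     fun p => (p.2.2.2.1, p.2.1, p.1, p.2.2.2.2, p.2.2.1), fun _ => rfl, fun _ => rfl⟩ _ _
    (fun _ => rfl)

lemma sum_reorder4 {a b c d : Type*} [Fintype a] [Fintype b] [Fintype c] [Fintype d]
    (f : a → b → c → d → ℝ) :
    ∑ x, ∑ y, ∑ z, ∑ w, f x y z w = ∑ z, ∑ w, ∑ x, ∑ y, f x y z w := by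
  have h1 : ∑ x, ∑ y, ∑ z, ∑ w, f x y z w =
      ∑ p : a × b × c × d, f p.1 p.2.1 p.2.2.1 p.2.2.2 := by
    simp only [Fintype.sum_prod_type]
  have h2 : ∑ z, ∑ w, ∑ x, ∑ y, f x y z w =
      ∑ p : c × d × a × b, f p.2.2.1 p.2.2.2 p.1 p.2.1 := by
    simp only [Fintype.sum_prod_type]
  rw [h1, h2]
  exact Fintype.sum_equiv
    ⟨fun p => (p.2.2.1, p.2.2.2, p.1, p.2.1),
     fun p => (p.2.2.1, p.2.2.2, p.1, p.2.1), fun _ => rfl, fun _ => rfl⟩ _ _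
    (fun _ => rfl)

lemma decouple2 [Nonempty γA] [Nonempty ωA] [Nonempty γB] [Nonempty ωB]
    (χ : ρ × ((γA × ωA) × (γB × ωB)) → ℂ) :
    ∃ (UA : Matrix (γA × ωA) (γA × ωA) ℂ) (UB : Matrix (γB × ωB) (γB × ωB) ℂ),
      UAᴴ * UA = 1 ∧ UBᴴ * UB = 1 ∧
      N2 ((reN (((1 : Matrix ρ ρ ℂ) ⊗ₖ (UA ⊗ₖ UB)) *ᵥ χ))ᴴ *
          reN (((1 : Matrix ρ ρ ℂ) ⊗ₖ (UA ⊗ₖ UB)) *ᵥ χ)) ≤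
        (nsq χ) ^ 2 / (Fintype.card γA * Fintype.card γB) +
        N2 (mB χ * (mB χ)ᴴ) / (Fintype.card γA * Fintype.card ωB) +
        N2 (mA χ * (mA χ)ᴴ) / (Fintype.card ωA * Fintype.card γB) +
        N2 (mR χ * (mR χ)ᴴ) / (Fintype.card ωA * Fintype.card ωB) := by
  let XB : (ρ × ρ) × ((γA × ωA) × (γA × ωA)) → Matrix (γB × ωB) (γB × ωB) ℂ := fun k =>
    vecMulVec (fun j => χ (k.1.1, (k.2.1, j))) (star fun j => χ (k.1.2, (k.2.2, j)))
  let XB' : (ρ × ρ) → Matrix (γB × ωB) (γB × ωB) ℂ := fun k => ∑ i, XB (k, (i, i))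
  obtain ⟨UB, hUB, hB⟩ := decouple1
    (K := ((ρ × ρ) × ((γA × ωA) × (γA × ωA))) ⊕ (ρ × ρ))
    (fun k => Sum.elim (fun _ => 1 / (Fintype.card γA : ℝ)) (fun _ => 1 / (Fintype.card ωA : ℝ)) k)
    (by rintro (k | k) <;> simp) (fun k => Sum.elim XB XB' k)
  simp only [Fintype.sum_sum_type, Sum.elim_inl, Sum.elim_inr] at hB
  let χ1 : ρ → (γA × ωA) → (γB × ωB) → ℂ := fun r i => UB *ᵥ fun j => χ (r, (i, j))
  let XA : (ρ × ρ) × (ωB × ωB) → Matrix (γA × ωA) (γA × ωA) ℂ := fun k =>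
    ∑ b, vecMulVec (fun i => χ1 k.1.1 i (b, k.2.1)) (star fun i => χ1 k.1.2 i (b, k.2.2))
  obtain ⟨UA, hUA, hA⟩ := decouple1 (K := (ρ × ρ) × (ωB × ωB)) (fun _ => 1) (by simp) XA
  refine ⟨UA, UB, hUA, hUB, ?_⟩
  have e1 : N2 ((reN (((1 : Matrix ρ ρ ℂ) ⊗ₖ (UA ⊗ₖ UB)) *ᵥ χ))ᴴ *
          reN (((1 : Matrix ρ ρ ℂ) ⊗ₖ (UA ⊗ₖ UB)) *ᵥ χ)) =
      ∑ k, 1 * N2 (ptr (UA * XA k * UAᴴ)) := by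
    have : ∀ k w w', ptr (UA * XA k * UAᴴ) w w' = ∑ c, ∑ b,
        (UA *ᵥ fun i => χ1 k.1.1 i (b, k.2.1)) (c, w) *
        star ((UA *ᵥ fun i => χ1 k.1.2 i (b, k.2.2)) (c, w')) := by
      intro k w w'
      simp only [XA, Matrix.mul_sum, Matrix.sum_mul, rank1, ptr, of_apply, Matrix.sum_apply,
        vecMulVec_apply, Pi.star_apply]
    simp only [N2, this]
    simp only [Fintype.sum_prod_type (α₁ := ρ × ρ) (α₂ := ωB × ωB), Fintype.sum_prod_type (α₁ := ρ) (α₂ := ωA × ωB), Fintype.sum_prod_type (α₁ := ωA) (α₂ := ωB),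
      Fintype.sum_prod_type (α₁ := ρ) (α₂ := ρ), Fintype.sum_prod_type (α₁ := ωB) (α₂ := ωB), one_mul]
    rw [sum_reorder6]
    refine Finset.sum_congr rfl fun r _ => Finset.sum_congr rfl fun r' _ => Finset.sum_congr rfl
      fun v _ => Finset.sum_congr rfl fun v' _ => Finset.sum_congr rfl fun w _ =>
      Finset.sum_congr rfl fun w' _ => ?_
    congr 1
    simp only [mul_apply, conjTranspose_apply]
    rw [sum_norm_star]
    simp only [Fintype.sum_prod_type, reN, of_apply, kron_apply2, χ1]
  have e2 : ∑ k, N2 (XA k) = ∑ k, N2 (ptr (UB * XB k * UBᴴ)) := by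
    have : ∀ k v v', ptr (UB * XB k * UBᴴ) v v' = ∑ b, χ1 k.1.1 k.2.1 (b, v) *
        star (χ1 k.1.2 k.2.2 (b, v')) := by
      intro k w w'
      simp only [XB, rank1, ptr, of_apply, vecMulVec_apply, Pi.star_apply, χ1]
    simp only [N2, this, XA, Matrix.sum_apply, vecMulVec_apply, Pi.star_apply]
    simp only [Fintype.sum_prod_type (α₁ := ρ × ρ)]
    refine Finset.sum_congr rfl fun k _ => ?_
    simp only [Fintype.sum_prod_type (α₁ := ωB) (α₂ := ωB),
      Fintype.sum_prod_type (α₁ := γA × ωA) (α₂ := γA × ωA)]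
    rw [sum_reorder4]
  have e3 : ∑ k, ‖(XA k).trace‖ ^ 2 = ∑ k, N2 (ptr (UB * XB' k * UBᴴ)) := by
    have : ∀ k v v', ptr (UB * XB' k * UBᴴ) v v' = ∑ b, ∑ i, χ1 k.1 i (b, v) *
        star (χ1 k.2 i (b, v')) := by
      intro k w w'
      simp only [XB', XB, Matrix.mul_sum, Matrix.sum_mul, rank1, ptr, of_apply, vecMulVec_apply,
        Pi.star_apply, χ1, Matrix.sum_apply]
    simp only [N2, this, XA, Matrix.trace, diag_apply, Matrix.sum_apply, vecMulVec_apply,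
      Pi.star_apply]
    rw [Fintype.sum_prod_type]
    refine Finset.sum_congr rfl fun k _ => ?_
    rw [Fintype.sum_prod_type]
    refine Finset.sum_congr rfl fun v _ => Finset.sum_congr rfl fun v' _ => ?_
    rw [Finset.sum_comm]
  have f1 : ∑ k, N2 (XB k) = (nsq χ) ^ 2 := by
    have : ∀ k, N2 (XB k) = (∑ j, ‖χ (k.1.1, (k.2.1, j))‖ ^ 2) * ∑ j, ‖χ (k.1.2, (k.2.2, j))‖ ^ 2 := by
      intro k
      simp only [N2, XB, vecMulVec_apply, Pi.star_apply, norm_mul, norm_star, mul_pow,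
        Finset.sum_mul_sum]
    have h2 : nsq χ = ∑ r, ∑ i, ∑ j, ‖χ (r, (i, j))‖ ^ 2 := by
      rw [nsq, Fintype.sum_prod_type]
      refine Finset.sum_congr rfl fun r _ => ?_
      rw [Fintype.sum_prod_type]
    simp only [this]
    rw [Fintype.sum_prod_type, Fintype.sum_prod_type, h2, sq, Finset.sum_mul_sum]
    refine Finset.sum_congr rfl fun r _ => Finset.sum_congr rfl fun r' _ => ?_
    rw [Fintype.sum_prod_type, Finset.sum_mul_sum]
  have f2 : ∑ k, ‖(XB k).trace‖ ^ 2 = N2 (mB χ * (mB χ)ᴴ) := by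
    simp only [N2, mB, mul_apply, conjTranspose_apply, of_apply, XB, Matrix.trace, diag_apply,
      vecMulVec_apply, Pi.star_apply]
    rw [Fintype.sum_prod_type, Fintype.sum_prod_type, Fintype.sum_prod_type]
    refine Finset.sum_congr rfl fun r _ => ?_
    simp only [Fintype.sum_prod_type (α₁ := γA × ωA) (α₂ := γA × ωA),
      Fintype.sum_prod_type (α₁ := ρ) (α₂ := γA × ωA)]
    rw [Finset.sum_comm]
  have f3 : ∑ k, N2 (XB' k) = N2 (mA χ * (mA χ)ᴴ) := by
    simp only [N2, mA, mul_apply, conjTranspose_apply, of_apply, XB', XB, Matrix.sum_apply,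
      vecMulVec_apply, Pi.star_apply]
    rw [Fintype.sum_prod_type, Fintype.sum_prod_type]
    refine Finset.sum_congr rfl fun r _ => ?_
    simp only [Fintype.sum_prod_type (α₁ := ρ) (α₂ := γB × ωB)]
    rw [Finset.sum_comm]
  have f4 : ∑ k, ‖(XB' k).trace‖ ^ 2 = N2 (mR χ * (mR χ)ᴴ) := by
    simp only [N2, mR, mul_apply, conjTranspose_apply, of_apply, XB', XB, Matrix.trace_sum]
    simp only [Matrix.trace, diag_apply, vecMulVec_apply, Pi.star_apply]
    rw [Fintype.sum_prod_type]
    refine Finset.sum_congr rfl fun r _ => Finset.sum_congr rfl fun r' _ => ?_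
    rw [Fintype.sum_prod_type (α₁ := γA × ωA) (α₂ := γB × ωB)]
  rw [e1]
  refine hA.trans ?_
  simp only [one_mul, Finset.sum_add_distrib, ← Finset.sum_div]
  rw [e2, e3]
  simp only [mul_add, Finset.sum_add_distrib, ← Finset.sum_div, ← Finset.mul_sum, f1, f2, f3, f4]
    at hB
  refine le_trans (le_of_eq ?_) (hB.trans (le_of_eq ?_))
  · ring
  · field_simp; ring

end two

open Matrix
open scoped ComplexOrder
open scoped Kronecker
set_option linter.unusedSectionVars false

section ps
variable {m n k : Type*} [Fintype m] [DecidableEq m] [Fintype n] [DecidableEq n]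
  [Fintype k] [DecidableEq k]

lemma powers_stormer {S T : Matrix n n ℂ} (hS : S.PosSemidef) (hT : T.PosSemidef) :
    N2 (S - T) ≤ Real.sqrt (Fintype.card n) * Real.sqrt (N2 (S * S - T * T)) := by
  obtain ⟨Q, hQ1, hQ2, hQ⟩ := herm_spec (hS.isHermitian.sub hT.isHermitian)
  set lam := (hS.isHermitian.sub hT.isHermitian).eigenvalues with hlam
  set S1 := Qᴴ * S * Q with hS1
  set T1 := Qᴴ * T * Q with hT1
  have pS : S1.PosSemidef := hS.conjTranspose_mul_mul_same Q
  have pT : T1.PosSemidef := hT.conjTranspose_mul_mul_same Q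
  have hd : S1 - T1 = diagonal (fun i => (lam i : ℂ)) := by
    have : S1 - T1 = Qᴴ * (S - T) * Q := by rw [hS1, hT1]; noncomm_ring
    rw [this, hQ]
    calc _ = (Qᴴ * Q) * diagonal (fun i => (lam i : ℂ)) * (Qᴴ * Q) := by noncomm_ring
      _ = _ := by rw [hQ1]; simp
  have hsq : S1 * S1 - T1 * T1 = Qᴴ * (S * S - T * T) * Q := by
    calc _ = Qᴴ * S * (Q * Qᴴ) * S * Q - Qᴴ * T * (Q * Qᴴ) * T * Q := by
          rw [hS1, hT1]; noncomm_ring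
      _ = _ := by rw [hQ2]; noncomm_ring
  have c1 : Ctr Q := Ctr.of_iso hQ1
  have b1 : N2 (S - T) ≤ ∑ i, lam i ^ 2 := by
    rw [hQ]
    refine (c1.adj.N2_le' _).trans ((c1.N2_le _).trans (le_of_eq ?_))
    simp only [N2]
    refine Finset.sum_congr rfl fun i _ => ?_
    rw [Finset.sum_eq_single i]
    · simp [diagonal_apply_eq]
    · intro j _ hj; rw [diagonal_apply_ne _ hj.symm]; simp
    · simp
  have b2 : N2 (S1 * S1 - T1 * T1) ≤ N2 (S * S - T * T) := by
    rw [hsq]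
    exact (c1.N2_le' _).trans (c1.adj.N2_le _)
  have b3 : ∀ i, lam i ^ 2 ≤ ‖(S1 * S1 - T1 * T1) i i‖ := by
    intro i
    have hs := pS.diag_nonneg (i := i)
    have ht := pT.diag_nonneg (i := i)
    have hi : S1 i i - T1 i i = lam i := by
      have := congrFun (congrFun hd i) i
      simpa using this
    have h1 : (S1 * S1 - T1 * T1) i i = (lam i : ℂ) * (S1 i i + T1 i i) := by
      have : S1 * S1 - T1 * T1 = T1 * (S1 - T1) + (S1 - T1) * T1 + (S1 - T1) * (S1 - T1) := by
        noncomm_ring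
      rw [this, hd]
      simp only [Matrix.add_apply, mul_diagonal, diagonal_mul, diagonal_apply_eq]
      rw [← hi]; ring
    rw [Complex.le_def] at hs ht
    have hsr : S1 i i = ((S1 i i).re : ℂ) := Complex.ext rfl (by simpa using hs.2.symm)
    have htr : T1 i i = ((T1 i i).re : ℂ) := Complex.ext rfl (by simpa using ht.2.symm)
    have hs0 : 0 ≤ (S1 i i).re := by simpa using hs.1
    have ht0 : 0 ≤ (T1 i i).re := by simpa using ht.1
    have hl : (S1 i i).re - (T1 i i).re = lam i := by
      have := congrArg Complex.re hi
      simpa using this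
    rw [h1, norm_mul, hsr, htr, ← Complex.ofReal_add, Complex.norm_real, Complex.norm_real,
      Real.norm_eq_abs, Real.norm_eq_abs, abs_of_nonneg (by positivity : 0 ≤ (S1 i i).re + (T1 i i).re),
      ← sq_abs, sq]
    apply mul_le_mul_of_nonneg_left _ (abs_nonneg _)
    rw [← hl, abs_le]; constructor <;> linarith
  have b4 : (∑ i, ‖(S1 * S1 - T1 * T1) i i‖) ^ 2 ≤ (Fintype.card n : ℝ) * N2 (S * S - T * T) := by
    have h1 := sq_sum_le_card_mul_sum_sq (s := (Finset.univ : Finset n))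
      (f := fun i => ‖(S1 * S1 - T1 * T1) i i‖)
    refine h1.trans ?_
    rw [Finset.card_univ]
    apply mul_le_mul_of_nonneg_left _ (by positivity)
    refine le_trans ?_ b2
    unfold N2
    refine Finset.sum_le_sum fun i _ => ?_
    exact Finset.single_le_sum (f := fun j => ‖(S1 * S1 - T1 * T1) i j‖ ^ 2)
      (fun j _ => by positivity) (Finset.mem_univ i)
  refine b1.trans ((Finset.sum_le_sum fun i _ => b3 i).trans ?_)
  rw [← Real.sqrt_mul (by positivity)]
  exact Real.le_sqrt_of_sq_le b4

lemma uhlmann (M : Matrix m n ℂ) (N : Matrix k n ℂ) : ∃ Z : Matrix m k ℂ, Ctr Z ∧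
    (N2 N + N2 M) / 2 - Real.sqrt (Fintype.card n) * Real.sqrt (N2 (Nᴴ * N - Mᴴ * M)) / 2 ≤
      ((Mᴴ * Z * N).trace).re := by
  obtain ⟨T, V2, pT, hT, c2, h2⟩ := exists_polar M
  obtain ⟨S, V1, pS, hS, c1, h1⟩ := exists_polar N
  refine ⟨V2 * V1ᴴ, c2.mul c1.adj, ?_⟩
  have e1 : Mᴴ * (V2 * V1ᴴ) * N = T * S := by
    have : Mᴴ * V2 = T := by
      rw [← pT.isHermitian.eq, ← h2, conjTranspose_mul, conjTranspose_conjTranspose]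
    rw [← Matrix.mul_assoc, Matrix.mul_assoc, this, h1]
  have hp := powers_stormer pS pT
  rw [hS, hT] at hp
  have e2 : N2 (S - T) = N2 N + N2 M - 2 * ((T * S).trace).re := by
    rw [N2_eq_re, N2_eq_re N, N2_eq_re M, ← hS, ← hT, conjTranspose_sub, pS.isHermitian.eq,
      pT.isHermitian.eq]
    have : (S - T) * (S - T) = S * S + T * T - S * T - T * S := by noncomm_ring
    rw [this]
    simp only [trace_sub, trace_add, Complex.sub_re, Complex.add_re]
    rw [trace_mul_comm S T]; ring
  rw [e1]
  linarith

end ps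

section tau
variable {ρ W : Type*} [Fintype ρ] [DecidableEq ρ] [Fintype W] [DecidableEq W] [Nonempty W]

lemma N2_sub_tau (σ : Matrix (ρ × W) (ρ × W) ℂ) (θ : Matrix ρ ρ ℂ)
    (h : ∀ r r', θ r r' = ∑ w, σ (r, w) (r', w)) :
    N2 (σ - θ ⊗ₖ (((1 / Fintype.card W : ℝ) : ℂ) • (1 : Matrix W W ℂ))) =
      N2 σ - N2 θ / Fintype.card W := by
  have hW : (Fintype.card W : ℝ) ≠ 0 := by exact_mod_cast Fintype.card_ne_zero
  set t : ℝ := 1 / Fintype.card W with ht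
  have hent : ∀ r w r' w', ‖(σ - θ ⊗ₖ ((t : ℂ) • (1 : Matrix W W ℂ))) (r, w) (r', w')‖ ^ 2 =
      ‖σ (r, w) (r', w')‖ ^ 2 + if w = w' then t ^ 2 * ‖θ r r'‖ ^ 2 -
        2 * t * (σ (r, w) (r', w) * star (θ r r')).re else 0 := by
    intro r w r' w'
    simp only [Matrix.sub_apply, kroneckerMap_apply, Matrix.smul_apply, one_apply, smul_eq_mul]
    split_ifs with hw
    · subst hw
      simp only [← Complex.normSq_eq_norm_sq, Complex.normSq_apply]
      simp
      ring
    · simp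
  unfold N2
  simp only [Fintype.sum_prod_type, hent, Finset.sum_add_distrib, Finset.sum_ite_eq,
    Finset.mem_univ, if_true, Finset.sum_div]
  have hsum : ∀ r, ∑ w, ∑ r', (t ^ 2 * ‖θ r r'‖ ^ 2 - 2 * t * (σ (r, w) (r', w) * star (θ r r')).re) =
      - ∑ r', ‖θ r r'‖ ^ 2 / Fintype.card W := by
    intro r
    rw [Finset.sum_comm, ← Finset.sum_neg_distrib]
    refine Finset.sum_congr rfl fun r' _ => ?_
    have h1 : ∑ w, (σ (r, w) (r', w) * star (θ r r')).re = ‖θ r r'‖ ^ 2 := by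
      rw [← Complex.re_sum, ← Finset.sum_mul, ← h, ← normsq_c, Complex.ofReal_re]
    rw [Finset.sum_sub_distrib, ← Finset.mul_sum (f := fun w => (σ (r, w) (r', w) * star (θ r r')).re), h1]
    simp only [Finset.sum_const, Finset.card_univ, nsmul_eq_mul]
    rw [ht]; field_simp; ring
  rw [Finset.sum_congr rfl fun r _ => hsum r, Finset.sum_neg_distrib]
  ring

end tau

open Matrix
open scoped ComplexOrder
open scoped Kronecker
set_option linter.unusedSectionVars false

section gen
variable {m n k l : Type*} [Fintype m] [DecidableEq m] [Fintype n] [DecidableEq n]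
  [Fintype k] [DecidableEq k] [Fintype l] [DecidableEq l]

lemma Ctr.transpose {A : Matrix m n ℂ} (h : Ctr A) : Ctr Aᵀ := by
  have h1 := h.adj
  unfold Ctr at h1 ⊢
  rw [conjTranspose_conjTranspose] at h1
  have := h1.transpose
  rwa [transpose_sub, transpose_one, transpose_mul] at this

lemma Ctr.one : Ctr (1 : Matrix m m ℂ) := Ctr.of_iso (by simp)

lemma Ctr.kron_one {A : Matrix m n ℂ} (h : Ctr A) : Ctr (A ⊗ₖ (1 : Matrix k k ℂ)) := by
  obtain ⟨B, hB⟩ := exists_sqrt h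
  have : 1 - (A ⊗ₖ (1 : Matrix k k ℂ))ᴴ * (A ⊗ₖ (1 : Matrix k k ℂ)) =
      (B ⊗ₖ (1 : Matrix k k ℂ))ᴴ * (B ⊗ₖ (1 : Matrix k k ℂ)) := by
    rw [conjTranspose_kronecker, conjTranspose_kronecker, ← mul_kronecker_mul, ← mul_kronecker_mul,
      hB, conjTranspose_one, Matrix.mul_one, ← one_kronecker_one]
    ext x y; simp only [Matrix.sub_apply, kroneckerMap_apply, sub_mul]
  unfold Ctr
  rw [this]
  exact posSemidef_conjTranspose_mul_self _

lemma Ctr.one_kron {A : Matrix m n ℂ} (h : Ctr A) : Ctr ((1 : Matrix k k ℂ) ⊗ₖ A) := by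
  obtain ⟨B, hB⟩ := exists_sqrt h
  have : 1 - ((1 : Matrix k k ℂ) ⊗ₖ A)ᴴ * ((1 : Matrix k k ℂ) ⊗ₖ A) =
      ((1 : Matrix k k ℂ) ⊗ₖ B)ᴴ * ((1 : Matrix k k ℂ) ⊗ₖ B) := by
    rw [conjTranspose_kronecker, conjTranspose_kronecker, ← mul_kronecker_mul, ← mul_kronecker_mul,
      hB, conjTranspose_one, Matrix.mul_one, ← one_kronecker_one]
    ext x y; simp only [Matrix.sub_apply, kroneckerMap_apply, mul_sub]
  unfold Ctr
  rw [this]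
  exact posSemidef_conjTranspose_mul_self _

lemma Ctr.kron {A : Matrix m n ℂ} {B : Matrix k l ℂ} (hA : Ctr A) (hB : Ctr B) : Ctr (A ⊗ₖ B) := by
  have : A ⊗ₖ B = (A ⊗ₖ (1 : Matrix k k ℂ)) * ((1 : Matrix n n ℂ) ⊗ₖ B) := by
    rw [← mul_kronecker_mul, Matrix.mul_one, Matrix.one_mul]
  rw [this]
  exact hA.kron_one.mul hB.one_kron

lemma nsq_eq_N2 (v : n → ℂ) : nsq v = N2 (replicateCol Unit v) := by
  simp [nsq, N2]

lemma Ctr.nsq_le {A : Matrix m n ℂ} (h : Ctr A) (v : n → ℂ) : nsq (A *ᵥ v) ≤ nsq v := by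
  rw [nsq_eq_N2, nsq_eq_N2, replicateCol_mulVec]
  exact h.N2_le _

lemma nsq_iso {A : Matrix m n ℂ} (h : Aᴴ * A = 1) (v : n → ℂ) : nsq (A *ᵥ v) = nsq v := by
  rw [nsq_eq_N2, nsq_eq_N2, replicateCol_mulVec, N2_eq_re, N2_eq_re, conjTranspose_mul,
    Matrix.mul_assoc, ← Matrix.mul_assoc Aᴴ, h, Matrix.one_mul]

lemma nsq_nonneg (v : n → ℂ) : 0 ≤ nsq v := by unfold nsq; positivity

lemma cs_sum (f g : n → ℂ) : ‖∑ i, star (f i) * g i‖ ^ 2 ≤ (∑ i, ‖f i‖ ^ 2) * ∑ i, ‖g i‖ ^ 2 := by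
  have h1 : ‖∑ i, star (f i) * g i‖ ≤ ∑ i, ‖f i‖ * ‖g i‖ := by
    refine (norm_sum_le _ _).trans (le_of_eq ?_)
    simp
  calc ‖∑ i, star (f i) * g i‖ ^ 2 ≤ (∑ i, ‖f i‖ * ‖g i‖) ^ 2 := by gcongr
    _ ≤ _ := Finset.sum_mul_sq_le_sq_mul_sq _ _ _

lemma N2_cs (X Y : Matrix m n ℂ) : ‖(Xᴴ * Y).trace‖ ≤ Real.sqrt (N2 X) * Real.sqrt (N2 Y) := by
  rw [← Real.sqrt_mul (N2_nonneg X)]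
  apply Real.le_sqrt_of_sq_le
  have := cs_sum (fun p : n × m => X p.2 p.1) (fun p => Y p.2 p.1)
  simp only [Fintype.sum_prod_type] at this
  have h2 : (Xᴴ * Y).trace = ∑ x, ∑ y, star (X y x) * Y y x := by
    simp [Matrix.trace, mul_apply]
  rw [h2]
  refine this.trans (le_of_eq ?_)
  unfold N2
  rw [Finset.sum_comm, Finset.sum_comm (s := (Finset.univ : Finset n))]

lemma ctr_defect {P : Matrix n k ℂ} (h : Ctr P) (M : Matrix m n ℂ) :
    N2 (M - M * (P * Pᴴ)) ≤ N2 M - N2 (M * P) := by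
  have h1 : N2 (M * (P * Pᴴ)) ≤ N2 (M * P) := by
    rw [← Matrix.mul_assoc]; exact h.adj.N2_le' _
  have h2 : N2 (M - M * (P * Pᴴ)) = N2 M - 2 * N2 (M * P) + N2 (M * (P * Pᴴ)) := by
    rw [N2_eq_re, N2_eq_re M, N2_eq_re (M * P), N2_eq_re (M * (P * Pᴴ))]
    have e : (M - M * (P * Pᴴ))ᴴ * (M - M * (P * Pᴴ)) = Mᴴ * M - Mᴴ * M * P * Pᴴ - P * (Pᴴ * Mᴴ * M) +
        (M * (P * Pᴴ))ᴴ * (M * (P * Pᴴ)) := by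
      simp only [conjTranspose_sub, conjTranspose_mul, conjTranspose_conjTranspose, Matrix.sub_mul,
        Matrix.mul_sub, Matrix.mul_assoc]
      abel
    rw [e]
    simp only [trace_add, trace_sub, Complex.add_re, Complex.sub_re]
    have e1 : (Mᴴ * M * P * Pᴴ).trace = ((M * P)ᴴ * (M * P)).trace := by
      rw [trace_mul_comm, conjTranspose_mul]; simp only [Matrix.mul_assoc]
    have e2 : (P * (Pᴴ * Mᴴ * M)).trace = ((M * P)ᴴ * (M * P)).trace := by
      rw [trace_mul_comm, conjTranspose_mul]; simp only [Matrix.mul_assoc]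
    rw [e1, e2]; ring
  linarith

end gen

section oneshot
variable {γA ωA γB ωB ρ a b r : Type} [Fintype γA] [DecidableEq γA] [Fintype ωA] [DecidableEq ωA]
  [Fintype γB] [DecidableEq γB] [Fintype ωB] [DecidableEq ωB] [Fintype ρ] [DecidableEq ρ]
  [Fintype a] [DecidableEq a] [Fintype b] [DecidableEq b] [Fintype r] [DecidableEq r]

/-- target matrix -/
noncomputable def tM (W : Type) [Fintype W] [DecidableEq W] (χ : ρ × (a × b) → ℂ) :
    Matrix ((a × b) × W) (ρ × W) ℂ :=
  (mR χ)ᵀ ⊗ₖ (((1 / Real.sqrt (Fintype.card W) : ℝ) : ℂ) • (1 : Matrix W W ℂ))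

lemma N2_mR (χ : ρ × (a × b) → ℂ) : N2 (mR χ) = nsq χ := by
  simp only [N2, nsq, mR, of_apply]
  rw [Fintype.sum_prod_type]

lemma N2_reN (χ : ρ × ((γA × ωA) × (γB × ωB)) → ℂ) : N2 (reN χ) = nsq χ := by
  simp only [N2, nsq, reN, of_apply, ← Fintype.sum_prod_type']
  exact Fintype.sum_equiv
    ⟨fun p => (p.2.1, ((p.1.1, p.2.2.1), (p.1.2, p.2.2.2))),
      fun q => ((q.2.1.1, q.2.2.1), (q.1, (q.2.1.2, q.2.2.2))), fun _ => rfl, fun _ => rfl⟩ _ _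
    (fun _ => rfl)

lemma tM_sq (W : Type) [Fintype W] [DecidableEq W] [Nonempty W] (χ : ρ × (a × b) → ℂ) :
    (tM W χ)ᴴ * tM W χ = (((mR χ)ᵀ)ᴴ * (mR χ)ᵀ) ⊗ₖ
      (((1 / Fintype.card W : ℝ) : ℂ) • (1 : Matrix W W ℂ)) := by
  rw [tM, conjTranspose_kronecker, ← mul_kronecker_mul]
  congr 1
  rw [conjTranspose_smul, conjTranspose_one, smul_mul_smul_comm, Matrix.one_mul]
  congr 1
  rw [Complex.star_def, Complex.conj_ofReal, ← Complex.ofReal_mul, div_mul_div_comm, one_mul,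
    Real.mul_self_sqrt (by positivity)]

lemma N2_tM (W : Type) [Fintype W] [DecidableEq W] [Nonempty W] (χ : ρ × (a × b) → ℂ) :
    N2 (tM W χ) = nsq χ := by
  have hW : (Fintype.card W : ℝ) ≠ 0 := by exact_mod_cast Fintype.card_ne_zero
  rw [N2_eq_re, tM_sq, trace_kronecker, ← N2_mR, trace_smul, trace_one]
  have : (((mR χ)ᵀ)ᴴ * (mR χ)ᵀ).trace = ((N2 (mR χ) : ℝ) : ℂ) := by
    rw [← N2_eq_trace]; congr 1
    unfold N2; rw [Finset.sum_comm]; rfl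
  rw [this, smul_eq_mul, ← Complex.ofReal_natCast, ← Complex.ofReal_mul, ← Complex.ofReal_mul,
    Complex.ofReal_re]
  field_simp

lemma mR_kron {ρ' a' b' : Type} (PR : Matrix ρ' ρ ℂ) (P : Matrix (a' × b') (a × b) ℂ)
    (χ : ρ × (a × b) → ℂ) : mR ((PR ⊗ₖ P) *ᵥ χ) = PR * mR χ * Pᵀ := by
  ext x y
  simp only [mR, of_apply, mulVec, dotProduct, mul_apply, transpose_apply, kroneckerMap_apply,
    Finset.sum_mul]
  rw [Fintype.sum_prod_type, Finset.sum_comm]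
  refine Finset.sum_congr rfl fun i _ => Finset.sum_congr rfl fun j _ => ?_
  ring

lemma reN_kron {ρ' : Type} (PR : Matrix ρ' ρ ℂ) (χ : ρ × ((γA × ωA) × (γB × ωB)) → ℂ) :
    reN ((PR ⊗ₖ (1 : Matrix ((γA × ωA) × (γB × ωB)) ((γA × ωA) × (γB × ωB)) ℂ)) *ᵥ χ) =
      reN χ * (PRᵀ ⊗ₖ (1 : Matrix (ωA × ωB) (ωA × ωB) ℂ)) := by
  ext x y
  simp only [reN, of_apply, mulVec, dotProduct, mul_apply, transpose_apply, kroneckerMap_apply]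
  rw [Fintype.sum_prod_type, Fintype.sum_prod_type]
  refine Finset.sum_congr rfl fun i _ => ?_
  rw [Finset.sum_eq_single ((x.1, y.2.1), (x.2, y.2.2)), Finset.sum_eq_single y.2]
  · simp; ring
  · intro w _ hw; simp [one_apply, hw]
  · simp
  · intro w _ hw; simp [one_apply, hw.symm]
  · simp

lemma sum_shuffle (f : (γA × ωA) × (γB × ωB) → ℂ) :
    ∑ w : ωA × ωB, ∑ c : γA × γB, f ((c.1, w.1), (c.2, w.2)) = ∑ p, f p := by
  rw [← Fintype.sum_prod_type' (f := fun (w : ωA × ωB) (c : γA × γB) => f ((c.1, w.1), (c.2, w.2)))]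
  let e : (ωA × ωB) × (γA × γB) ≃ (γA × ωA) × (γB × ωB) :=
    ⟨fun p => ((p.2.1, p.1.1), (p.2.2, p.1.2)), fun q => ((q.1.2, q.2.2), (q.1.1, q.2.1)),
      fun _ => rfl, fun _ => rfl⟩
  exact Equiv.sum_comp e f

lemma oneshot_core [Nonempty γA] [Nonempty ωA] [Nonempty γB] [Nonempty ωB]
    (χ : ρ × ((γA × ωA) × (γB × ωB)) → ℂ) (h1 : nsq χ ≤ 1) (μA μB : ℝ)
    (hA : N2 (mA χ * (mA χ)ᴴ) ≤ μA) (hB : N2 (mB χ * (mB χ)ᴴ) ≤ μB) :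
    ∃ (UA : Matrix (γA × ωA) (γA × ωA) ℂ) (UB : Matrix (γB × ωB) (γB × ωB) ℂ)
      (Z : Matrix (((γA × ωA) × (γB × ωB)) × (ωA × ωB)) (γA × γB) ℂ),
      UAᴴ * UA = 1 ∧ UBᴴ * UB = 1 ∧ Ctr Z ∧
      nsq χ - Real.sqrt (Fintype.card ρ * (Fintype.card ωA * Fintype.card ωB)) *
        Real.sqrt (1 / (Fintype.card γA * Fintype.card γB) + μB / (Fintype.card γA * Fintype.card ωB)
          + μA / (Fintype.card ωA * Fintype.card γB)) / 2 ≤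
      (((tM (ωA × ωB) χ)ᴴ * Z * reN (((1 : Matrix ρ ρ ℂ) ⊗ₖ (UA ⊗ₖ UB)) *ᵥ χ)).trace).re := by
  obtain ⟨UA, UB, hUA, hUB, hdec⟩ := decouple2 χ
  set Ω := ((1 : Matrix ρ ρ ℂ) ⊗ₖ (UA ⊗ₖ UB)) *ᵥ χ with hΩ
  obtain ⟨Z, hZ, hZ2⟩ := uhlmann (tM (ωA × ωB) χ) (reN Ω)
  refine ⟨UA, UB, Z, hUA, hUB, hZ, le_trans ?_ hZ2⟩
  have hU : (UA ⊗ₖ UB)ᴴ * (UA ⊗ₖ UB) = 1 := by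
    rw [conjTranspose_kronecker, ← mul_kronecker_mul, hUA, hUB, one_kronecker_one]
  have hU1 : ((1 : Matrix ρ ρ ℂ) ⊗ₖ (UA ⊗ₖ UB))ᴴ * ((1 : Matrix ρ ρ ℂ) ⊗ₖ (UA ⊗ₖ UB)) = 1 := by
    rw [conjTranspose_kronecker, ← mul_kronecker_mul, hU, conjTranspose_one, Matrix.one_mul,
      one_kronecker_one]
  rw [N2_reN, N2_tM, hΩ, nsq_iso hU1, ← hΩ]
  have e1 : N2 ((reN Ω)ᴴ * reN Ω - (tM (ωA × ωB) χ)ᴴ * tM (ωA × ωB) χ) =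
      N2 ((reN Ω)ᴴ * reN Ω) - N2 (((mR χ)ᵀ)ᴴ * (mR χ)ᵀ) / Fintype.card (ωA × ωB) := by
    rw [tM_sq]
    apply N2_sub_tau
    intro x x'
    have : ((mR χ)ᵀ)ᴴ * (mR χ)ᵀ = ((mR Ω)ᵀ)ᴴ * (mR Ω)ᵀ := by
      rw [hΩ, mR_kron, Matrix.one_mul, transpose_mul, transpose_transpose, conjTranspose_mul,
        Matrix.mul_assoc, ← Matrix.mul_assoc _ (UA ⊗ₖ UB), hU, Matrix.one_mul]
    rw [this]
    simp only [mul_apply, conjTranspose_apply, transpose_apply]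
    exact (sum_shuffle (γA := γA) (ωA := ωA) (γB := γB) (ωB := ωB)
      (fun p => star (mR Ω x p) * mR Ω x' p)).symm
  have e2 : N2 (((mR χ)ᵀ)ᴴ * (mR χ)ᵀ) = N2 (mR χ * (mR χ)ᴴ) := by
    have : ((mR χ)ᵀ)ᴴ * (mR χ)ᵀ = (mR χ * (mR χ)ᴴ)ᵀ := by
      rw [transpose_mul]; rfl
    rw [this]; unfold N2; rw [Finset.sum_comm]; rfl
  rw [e1, e2, Fintype.card_prod ρ, Fintype.card_prod ωA]
  push_cast
  have e3 : N2 ((reN Ω)ᴴ * reN Ω) - N2 (mR χ * (mR χ)ᴴ) / (Fintype.card ωA * Fintype.card ωB) ≤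
      1 / (Fintype.card γA * Fintype.card γB) + μB / (Fintype.card γA * Fintype.card ωB)
          + μA / (Fintype.card ωA * Fintype.card γB) := by
    have g1 : (nsq χ) ^ 2 / ((Fintype.card γA : ℝ) * Fintype.card γB) ≤
        1 / (Fintype.card γA * Fintype.card γB) := by
      gcongr
      exact pow_le_one₀ (nsq_nonneg _) h1
    have g2 : N2 (mB χ * (mB χ)ᴴ) / ((Fintype.card γA : ℝ) * Fintype.card ωB) ≤
        μB / (Fintype.card γA * Fintype.card ωB) := by gcongr
    have g3 : N2 (mA χ * (mA χ)ᴴ) / ((Fintype.card ωA : ℝ) * Fintype.card γB) ≤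
        μA / (Fintype.card ωA * Fintype.card γB) := by gcongr
    linarith
  have e4 := Real.sqrt_le_sqrt e3
  have e5 := mul_le_mul_of_nonneg_left e4
    (Real.sqrt_nonneg ((Fintype.card ρ : ℝ) * (Fintype.card ωA * Fintype.card ωB)))
  linarith

lemma oneshot [Nonempty γA] [Nonempty ωA] [Nonempty γB] [Nonempty ωB]
    (ψ : r × (a × b) → ℂ) (hψ : nsq ψ = 1) (PR : Matrix ρ r ℂ) (PA : Matrix (γA × ωA) a ℂ)
    (PB : Matrix (γB × ωB) b ℂ) (cR : Ctr PR) (cA : Ctr PA) (cB : Ctr PB)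
    (χ : ρ × ((γA × ωA) × (γB × ωB)) → ℂ) (hχ : χ = (PR ⊗ₖ (PA ⊗ₖ PB)) *ᵥ ψ) (η μA μB : ℝ)
    (hη : 1 - η ≤ nsq χ)
    (hA : N2 (mA χ * (mA χ)ᴴ) ≤ μA) (hB : N2 (mB χ * (mB χ)ᴴ) ≤ μB) :
    ∃ (EA : Matrix (γA × ωA) a ℂ) (EB : Matrix (γB × ωB) b ℂ)
      (Z : Matrix ((a × b) × (ωA × ωB)) (γA × γB) ℂ),
      Ctr EA ∧ Ctr EB ∧ Ctr Z ∧
      1 - η - Real.sqrt η - Real.sqrt (Fintype.card ρ * (Fintype.card ωA * Fintype.card ωB)) *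
        Real.sqrt (1 / (Fintype.card γA * Fintype.card γB) + μB / (Fintype.card γA * Fintype.card ωB)
          + μA / (Fintype.card ωA * Fintype.card γB)) / 2 ≤
      (((tM (ωA × ωB) ψ)ᴴ * Z * reN (((1 : Matrix r r ℂ) ⊗ₖ (EA ⊗ₖ EB)) *ᵥ ψ)).trace).re := by
  have hχ1 : nsq χ ≤ 1 := by
    rw [hχ, ← hψ]; exact (cR.kron (cA.kron cB)).nsq_le ψ
  obtain ⟨UA, UB, Z', hUA, hUB, hZ', hb⟩ := oneshot_core χ hχ1 μA μB hA hB
  have cEA : Ctr (UA * PA) := (Ctr.of_iso hUA).mul cA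
  have cEB : Ctr (UB * PB) := (Ctr.of_iso hUB).mul cB
  have cZ : Ctr (((PA ⊗ₖ PB) ⊗ₖ (1 : Matrix (ωA × ωB) (ωA × ωB) ℂ))ᴴ * Z') :=
    ((cA.kron cB).kron_one).adj.mul hZ'
  refine ⟨UA * PA, UB * PB, _, cEA, cEB, cZ, ?_⟩
  set N0 := reN (((1 : Matrix r r ℂ) ⊗ₖ ((UA * PA) ⊗ₖ (UB * PB))) *ᵥ ψ) with hN0
  set M0 := tM (ωA × ωB) ψ with hM0
  set P := PRᵀ ⊗ₖ (1 : Matrix (ωA × ωB) (ωA × ωB) ℂ) with hP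
  set V := (PA ⊗ₖ PB) ⊗ₖ (1 : Matrix (ωA × ωB) (ωA × ωB) ℂ) with hV
  have cP : Ctr P := cR.transpose.kron_one
  have cV : Ctr V := (cA.kron cB).kron_one
  have eN : reN (((1 : Matrix ρ ρ ℂ) ⊗ₖ (UA ⊗ₖ UB)) *ᵥ χ) = N0 * P := by
    rw [hN0, hP, ← reN_kron, hχ]
    congr 1
    rw [mulVec_mulVec, mulVec_mulVec, ← mul_kronecker_mul, ← mul_kronecker_mul, ← mul_kronecker_mul,
      Matrix.one_mul, Matrix.one_mul, Matrix.mul_one]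
  have eM : tM (ωA × ωB) χ = V * M0 * P := by
    rw [hV, hM0, hP, tM, tM, ← mul_kronecker_mul, ← mul_kronecker_mul, hχ, mR_kron, Matrix.mul_one,
      Matrix.one_mul, transpose_mul, transpose_mul, transpose_transpose, Matrix.mul_assoc]
  rw [eN, eM] at hb
  set X := Vᴴ * Z' * N0 with hX
  have t1 : ((V * M0 * P)ᴴ * Z' * (N0 * P)).trace = ((M0 * (P * Pᴴ))ᴴ * X).trace := by
    have : (V * M0 * P)ᴴ * Z' * (N0 * P) = (Pᴴ * M0ᴴ * X) * P := by
      rw [hX, conjTranspose_mul, conjTranspose_mul]; simp only [Matrix.mul_assoc]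
    rw [this, trace_mul_comm]
    congr 1
    simp only [conjTranspose_mul, conjTranspose_conjTranspose, Matrix.mul_assoc]
  have t2 : (M0ᴴ * (Vᴴ * Z') * N0).trace = ((V * M0 * P)ᴴ * Z' * (N0 * P)).trace +
      ((M0 - M0 * (P * Pᴴ))ᴴ * X).trace := by
    rw [t1, ← trace_add, ← Matrix.add_mul, ← conjTranspose_add, add_sub_cancel, hX]
    simp only [Matrix.mul_assoc]
  have hX1 : N2 X ≤ 1 := by
    rw [hX, Matrix.mul_assoc]
    refine (cV.adj.N2_le _).trans ((hZ'.N2_le _).trans ?_)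
    rw [hN0, N2_reN, ← hψ]
    exact (Ctr.one_kron (cEA.kron cEB)).nsq_le ψ
  have hd : N2 (M0 - M0 * (P * Pᴴ)) ≤ η := by
    refine (ctr_defect cP M0).trans ?_
    have : nsq χ ≤ N2 (M0 * P) := by
      rw [← N2_tM (ωA × ωB), eM, Matrix.mul_assoc]; exact cV.N2_le _
    rw [hM0, N2_tM, hψ, ← hM0]; linarith
  have hcs := N2_cs (M0 - M0 * (P * Pᴴ)) X
  have h3 : Real.sqrt (N2 (M0 - M0 * (P * Pᴴ))) * Real.sqrt (N2 X) ≤ Real.sqrt η := by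
    calc _ ≤ Real.sqrt η * 1 := by
          apply mul_le_mul (Real.sqrt_le_sqrt hd) _ (Real.sqrt_nonneg _) (Real.sqrt_nonneg _)
          rw [← Real.sqrt_one]; exact Real.sqrt_le_sqrt hX1
      _ = _ := mul_one _
  have h4 := (abs_le.mp (Complex.abs_re_le_norm ((M0 - M0 * (P * Pᴴ))ᴴ * X).trace)).1
  rw [t2, Complex.add_re]
  linarith

end oneshot

open Matrix
open scoped ComplexOrder
open scoped Kronecker
set_option linter.unusedSectionVars false

section fid
variable {ιA ιB ιR : Type} {n : ℕ} {γA ωA γB ωB ωC : Type}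
    [Fintype ιA] [Fintype ιB] [Fintype ιR] [DecidableEq ιR] [DecidableEq ιA] [DecidableEq ιB]
    [Fintype γA] [Fintype γB] [Fintype ωA] [Fintype ωB] [Fintype ωC]
    [DecidableEq γA] [DecidableEq γB] [DecidableEq ωA] [DecidableEq ωB] [DecidableEq ωC]

lemma codeFidelity_eq (φ : ιA × (ιB × ιR) → ℂ)
    (EA : Matrix (γA × ωA) (Fin n → ιA) ℂ)
    (EB : Matrix (γB × ωB) (Fin n → ιB) ℂ)
    (D : Matrix (((Fin n → ιA) × (Fin n → ιB)) × ωC) (γA × γB) ℂ) :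
    codeFidelity φ EA EB D = ∑ w, ‖∑ i, star (iidVec φ n i) *
      (codeMap (ιR := ιR) EA EB D *ᵥ iidVec φ n) (i, w)‖ ^ 2 := by
  unfold codeFidelity
  rw [rank1]
  set v := codeMap (ιR := ιR) EA EB D *ᵥ iidVec φ n with hv
  set ψ := iidVec φ n with hψ
  have : (star ψ ⬝ᵥ (Matrix.of fun i j : (Fin n → ιR) × ((Fin n → ιA) × (Fin n → ιB)) =>
        ∑ w : (ωA × ωB) × ωC, vecMulVec v (star v) (i, w) (j, w)) *ᵥ ψ) =
      ((∑ w, ‖∑ i, star (ψ i) * v (i, w)‖ ^ 2 : ℝ) : ℂ) := by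
    rw [Complex.ofReal_sum]
    simp only [normsq_c, dotProduct, mulVec, of_apply, vecMulVec_apply, Pi.star_apply, star_sum,
      Finset.sum_mul, Finset.mul_sum, star_mul', star_star]
    have e1 : ∀ x, ∑ x_1, ∑ i, star (ψ x) * (v (x, i) * star (v (x_1, i)) * ψ x_1) =
        ∑ i, ∑ x_1, star (ψ x) * (v (x, i) * star (v (x_1, i)) * ψ x_1) := fun x => Finset.sum_comm
    simp only [e1]
    rw [Finset.sum_comm]
    refine Finset.sum_congr rfl fun w _ => ?_
    rw [Finset.sum_comm]
    refine Finset.sum_congr rfl fun x _ =>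
      Finset.sum_congr rfl fun y _ => ?_
    ring
  rw [this, Complex.ofReal_re]

lemma codeMap_mulVec (ψ : (Fin n → ιR) × ((Fin n → ιA) × (Fin n → ιB)) → ℂ)
    (EA : Matrix (γA × ωA) (Fin n → ιA) ℂ)
    (EB : Matrix (γB × ωB) (Fin n → ιB) ℂ)
    (D : Matrix (((Fin n → ιA) × (Fin n → ιB)) × ωC) (γA × γB) ℂ) (r : Fin n → ιR)
    (x : (Fin n → ιA) × (Fin n → ιB)) (w : (ωA × ωB) × ωC) :
    (codeMap (ιR := ιR) EA EB D *ᵥ ψ) ((r, x), w) =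
      ∑ c : γA × γB, D (x, w.2) c * ∑ y, EA (c.1, w.1.1) y.1 * EB (c.2, w.1.2) y.2 * ψ (r, y) := by
  simp only [mulVec, dotProduct, codeMap, of_apply]
  rw [Fintype.sum_prod_type, Finset.sum_eq_single r]
  · simp only [if_true, Finset.sum_mul, Finset.mul_sum]
    rw [Finset.sum_comm (s := (Finset.univ : Finset (γA × γB)))]
    refine Finset.sum_congr rfl fun y _ => ?_
    rw [Fintype.sum_prod_type (α₁ := γA) (α₂ := γB)]
    refine Finset.sum_congr rfl fun c _ => Finset.sum_congr rfl fun c' _ => ?_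
    ring
  · intro b _ hb; simp [hb.symm]
  · simp

lemma fid_ge [Nonempty ωA] [Nonempty ωB] [Nonempty γA] [Nonempty γB]
    (φ : ιA × (ιB × ιR) → ℂ) [Nonempty ιA] [Nonempty ιB]
    (EA0 : Matrix (γA × ωA) (Fin n → ιA) ℂ) (EB0 : Matrix (γB × ωB) (Fin n → ιB) ℂ)
    (Z : Matrix (((Fin n → ιA) × (Fin n → ιB)) × (ωA × ωB)) (γA × γB) ℂ)
    (cA : Ctr EA0) (cB : Ctr EB0) (cZ : Ctr Z) (x : ℝ) (hx0 : 0 ≤ x)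
    (hx : x ≤ (((tM (ωA × ωB) (iidVec φ n))ᴴ * Z *
      reN (((1 : Matrix (Fin n → ιR) (Fin n → ιR) ℂ) ⊗ₖ (EA0 ⊗ₖ EB0)) *ᵥ iidVec φ n)).trace).re) :
    ∃ (dA dB dC : ℕ) (EA : Matrix (γA × Fin dA) (Fin n → ιA) ℂ)
      (EB : Matrix (γB × Fin dB) (Fin n → ιB) ℂ)
      (D : Matrix (((Fin n → ιA) × (Fin n → ιB)) × Fin dC) (γA × γB) ℂ),
      EAᴴ * EA = 1 ∧ EBᴴ * EB = 1 ∧ Dᴴ * D = 1 ∧ x ^ 2 ≤ codeFidelity φ EA EB D := by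
  obtain ⟨dA, eA, EA, iA, hEA, hEA2⟩ := cA.complete
  obtain ⟨dB, eB, EB, iB, hEB, hEB2⟩ := cB.complete
  obtain ⟨dC, eC, D, iC, hD, hD2⟩ := cZ.complete
  refine ⟨dA, dB, dC, EA, EB, D, hEA, hEB, hD, ?_⟩
  rw [codeFidelity_eq]
  set ψ := iidVec φ n with hψ
  set N0 := reN (((1 : Matrix (Fin n → ιR) (Fin n → ιR) ℂ) ⊗ₖ (EA0 ⊗ₖ EB0)) *ᵥ ψ) with hN0
  let s : ωA × ωB → ℂ := fun p => ∑ i, star (ψ i) * (Z * N0) (i.2, p) (i.1, p)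
  have hN0e : ∀ c r p, N0 c (r, p) = ∑ y, EA0 (c.1, p.1) y.1 * EB0 (c.2, p.2) y.2 * ψ (r, y) := by
    intro c r p
    rw [hN0]
    simp only [reN, of_apply, mulVec, dotProduct, kroneckerMap_apply]
    rw [Fintype.sum_prod_type, Finset.sum_eq_single r]
    · simp
    · intro b _ hb; simp [one_apply, hb.symm]
    · simp
  have hamp : ((tM (ωA × ωB) ψ)ᴴ * Z * N0).trace =
      ((1 / Real.sqrt (Fintype.card (ωA × ωB)) : ℝ) : ℂ) * ∑ p, s p := by
    have e1 : ∀ r p, ((tM (ωA × ωB) ψ)ᴴ * (Z * N0)) (r, p) (r, p) =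
        ((1 / Real.sqrt (Fintype.card (ωA × ωB)) : ℝ) : ℂ) *
          ∑ y, star (ψ (r, y)) * (Z * N0) (y, p) (r, p) := by
      intro r p
      rw [mul_apply, Fintype.sum_prod_type, Finset.mul_sum]
      refine Finset.sum_congr rfl fun y _ => ?_
      rw [Finset.sum_eq_single p]
      · rw [conjTranspose_apply, tM, kroneckerMap_apply, star_mul', Matrix.smul_apply, one_apply_eq,
          smul_eq_mul, mul_one, Complex.star_def, Complex.conj_ofReal]
        simp only [transpose_apply, mR, of_apply]
        ring
      · intro p' _ hp'
        rw [conjTranspose_apply, tM, kroneckerMap_apply, Matrix.smul_apply, one_apply_ne hp']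
        simp
      · simp
    rw [Matrix.mul_assoc, Matrix.trace, Fintype.sum_prod_type]
    simp only [diag_apply, e1, ← Finset.mul_sum, s]
    congr 1
    rw [Finset.sum_comm]
    refine Finset.sum_congr rfl fun p _ => ?_
    rw [Fintype.sum_prod_type]
  have hs : ∀ p : ωA × ωB, s p = ∑ i, star (ψ i) * (codeMap (ιR := ιR) EA EB D *ᵥ ψ)
      (i, ((eA p.1, eB p.2), eC p)) := by
    intro p
    refine Finset.sum_congr rfl fun i _ => ?_
    rw [codeMap_mulVec (r := i.1) (x := i.2), mul_apply]
    simp only [hEA2, hEB2, hD2, hN0e]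
  have hinj : Function.Injective (fun p : ωA × ωB => ((eA p.1, eB p.2), eC p)) := by
    intro p q h
    simp only [Prod.mk.injEq] at h
    exact iC h.2
  have h1 : ∑ p, ‖s p‖ ^ 2 ≤ ∑ w, ‖∑ i, star (ψ i) *
      (codeMap (ιR := ιR) EA EB D *ᵥ ψ) (i, w)‖ ^ 2 := by
    simp only [hs]
    rw [← Finset.sum_image (s := Finset.univ) (g := fun p : ωA × ωB => ((eA p.1, eB p.2), eC p))
      (f := fun w => ‖∑ i, star (ψ i) * (codeMap (ιR := ιR) EA EB D *ᵥ ψ) (i, w)‖ ^ 2)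
      (fun p _ q _ h => hinj h)]
    exact Finset.sum_le_sum_of_subset_of_nonneg (Finset.subset_univ _) (fun _ _ _ => by positivity)
  refine le_trans ?_ h1
  have hW : (0 : ℝ) < Fintype.card (ωA × ωB) := by exact_mod_cast Fintype.card_pos
  rw [hamp] at hx
  have h2 : x ≤ 1 / Real.sqrt (Fintype.card (ωA × ωB)) * ‖∑ p, s p‖ := by
    refine hx.trans ((Complex.re_le_norm _).trans (le_of_eq ?_))
    rw [norm_mul, Complex.norm_real, Real.norm_of_nonneg (by positivity)]
  calc x ^ 2 ≤ (1 / Real.sqrt (Fintype.card (ωA × ωB)) * ‖∑ p, s p‖) ^ 2 := by gcongr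
    _ = 1 / (Fintype.card (ωA × ωB) : ℝ) * ‖∑ p, s p‖ ^ 2 := by
        rw [mul_pow, div_pow, one_pow, Real.sq_sqrt hW.le]
    _ ≤ 1 / (Fintype.card (ωA × ωB) : ℝ) * (∑ p, ‖s p‖) ^ 2 := by
        gcongr; exact norm_sum_le _ _
    _ ≤ 1 / (Fintype.card (ωA × ωB) : ℝ) * ((Fintype.card (ωA × ωB) : ℝ) * ∑ p, ‖s p‖ ^ 2) := by
        gcongr
        have := sq_sum_le_card_mul_sum_sq (s := (Finset.univ : Finset (ωA × ωB)))
          (f := fun p => ‖s p‖)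
        rwa [Finset.card_univ] at this
    _ = _ := by field_simp

end fid

open Matrix
open scoped ComplexOrder
open scoped Kronecker
set_option linter.unusedSectionVars false

section mub
variable {r a b ρ α β p q k l : Type} [Fintype r] [Fintype a] [Fintype b] [Fintype ρ] [Fintype α]
  [Fintype β] [Fintype p] [Fintype q] [Fintype k] [Fintype l]
  [DecidableEq r] [DecidableEq a] [DecidableEq b]
  [DecidableEq ρ] [DecidableEq α] [DecidableEq β] [DecidableEq p] [DecidableEq q]
  [DecidableEq k] [DecidableEq l]

lemma mA_kron (PR : Matrix ρ r ℂ) (PA : Matrix α a ℂ) (PB : Matrix β b ℂ) (ψ : r × (a × b) → ℂ) :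
    mA ((PR ⊗ₖ (PA ⊗ₖ PB)) *ᵥ ψ) = (PR ⊗ₖ PB) * mA ψ * PAᵀ := by
  ext ⟨i, j⟩ x
  simp only [mA, of_apply, mulVec, dotProduct, mul_apply, kroneckerMap_apply, transpose_apply,
    Fintype.sum_prod_type, Finset.sum_mul]
  rw [Finset.sum_comm]
  refine Finset.sum_congr rfl fun x _ => ?_
  refine Finset.sum_congr rfl fun x _ => ?_
  refine Finset.sum_congr rfl fun x _ => ?_
  ring

lemma mB_kron (PR : Matrix ρ r ℂ) (PA : Matrix α a ℂ) (PB : Matrix β b ℂ) (ψ : r × (a × b) → ℂ) :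
    mB ((PR ⊗ₖ (PA ⊗ₖ PB)) *ᵥ ψ) = (PR ⊗ₖ PA) * mB ψ * PBᵀ := by
  ext ⟨i, j⟩ x
  simp only [mB, of_apply, mulVec, dotProduct, mul_apply, kroneckerMap_apply, transpose_apply,
    Fintype.sum_prod_type, Finset.sum_mul]
  have : ∀ f : r → a → b → ℂ, ∑ x, ∑ y, ∑ z, f x y z = ∑ z, ∑ x, ∑ y, f x y z := by
    intro f
    rw [Finset.sum_comm (s := (Finset.univ : Finset b))]
    exact Finset.sum_congr rfl fun x _ => Finset.sum_comm
  rw [this]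
  refine Finset.sum_congr rfl fun x _ => ?_
  refine Finset.sum_congr rfl fun x _ => ?_
  refine Finset.sum_congr rfl fun x _ => ?_
  ring

lemma N2_mA (χ : ρ × (a × b) → ℂ) : N2 (mA χ) = nsq χ := by
  simp only [N2, nsq, mA, of_apply, Fintype.sum_prod_type]
  exact Finset.sum_congr rfl fun x _ => Finset.sum_comm

lemma N2_mB (χ : ρ × (a × b) → ℂ) : N2 (mB χ) = nsq χ := by
  simp only [N2, nsq, mB, of_apply, Fintype.sum_prod_type]

lemma union2 {K : Matrix k p ℂ} {P : Matrix q l ℂ} (M : Matrix p q ℂ) (hK : Ctr K) (hP : Ctr P) :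
    N2 M - N2 (K * M * P) ≤ (N2 M - N2 (M * P)) + (N2 M - N2 (K * M)) := by
  obtain ⟨B, hB⟩ := exists_sqrt hK
  have key : ∀ {l : Type} [Fintype l] [DecidableEq l] (X : Matrix p l ℂ), N2 X - N2 (K * X) = N2 (B * X) := by
    intro l _ _ X
    have : Xᴴ * (Bᴴ * B) * X = Xᴴ * X - (K * X)ᴴ * (K * X) := by
      rw [hB]
      simp only [conjTranspose_mul, Matrix.mul_sub, Matrix.sub_mul, Matrix.mul_one, Matrix.mul_assoc]
    have h2 : (B * X)ᴴ * (B * X) = Xᴴ * (Bᴴ * B) * X := by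
      simp only [conjTranspose_mul, Matrix.mul_assoc]
    rw [N2_eq_re (B * X), h2, this, trace_sub, Complex.sub_re, ← N2_eq_re, ← N2_eq_re]
  have h1 := key M
  have h2 := key (M * P)
  have h3 := hP.N2_le' (B * M)
  rw [Matrix.mul_assoc] at h3
  rw [Matrix.mul_assoc]
  linarith

lemma union3 {PR : Matrix ρ r ℂ} {PA : Matrix α a ℂ} {PB : Matrix β b ℂ} (ψ : r × (a × b) → ℂ)
    (hR : Ctr PR) (hA : Ctr PA) (hB : Ctr PB) (hψ : nsq ψ = 1) (ηR ηA ηB : ℝ)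
    (h1 : 1 - ηR ≤ N2 ((mR ψ)ᵀ * PRᵀ)) (h2 : 1 - ηA ≤ N2 (mA ψ * PAᵀ))
    (h3 : 1 - ηB ≤ N2 (mB ψ * PBᵀ)) :
    1 - (ηR + ηA + ηB) ≤ nsq ((PR ⊗ₖ (PA ⊗ₖ PB)) *ᵥ ψ) := by
  have e1 := union2 (mR ψ) hR (hA.kron hB).transpose
  rw [← mR_kron, N2_mR, N2_mR, hψ] at e1
  have e2 : N2 (PR * mR ψ) = N2 ((mR ψ)ᵀ * PRᵀ) := by
    rw [← transpose_mul]; unfold N2; rw [Finset.sum_comm]; rfl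
  have e3 : N2 (mR ψ * (PA ⊗ₖ PB)ᵀ) = N2 (((1 : Matrix r r ℂ) ⊗ₖ PB) * mA ψ * PAᵀ) := by
    rw [← mA_kron, N2_mA, ← N2_mR, mR_kron, Matrix.one_mul]
  have e4 := union2 (mA ψ) ((Ctr.one (m := r)).kron hB) hA.transpose
  have e5 : N2 (((1 : Matrix r r ℂ) ⊗ₖ PB) * mA ψ) = N2 (mB ψ * PBᵀ) := by
    have := mA_kron (1 : Matrix r r ℂ) (1 : Matrix a a ℂ) PB ψ
    rw [transpose_one, Matrix.mul_one] at this
    rw [← this, N2_mA, ← N2_mB, mB_kron, one_kronecker_one, Matrix.one_mul]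
  rw [N2_mA, hψ, e5] at e4
  rw [e2, e3] at e1
  linarith

lemma mu_bound {K : Matrix k p ℂ} (hK : Ctr K) (S : Matrix p q ℂ) :
    N2 ((K * S) * (K * S)ᴴ) ≤ N2 (S * Sᴴ) := by
  have : (K * S) * (K * S)ᴴ = K * (S * Sᴴ * Kᴴ) := by
    simp only [conjTranspose_mul, Matrix.mul_assoc]
  rw [this]
  exact (hK.N2_le _).trans (hK.adj.N2_le' _)

lemma N2_cs_dim (X : Matrix p q ℂ) : (N2 X) ^ 2 ≤ Fintype.card p * N2 (X * Xᴴ) := by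
  have h1 : N2 X = ∑ i, ((X * Xᴴ) i i).re := by
    rw [← N2_conjTranspose, N2_eq_re, conjTranspose_conjTranspose, Matrix.trace, Complex.re_sum]; rfl
  have h2 := sq_sum_le_card_mul_sum_sq (s := (Finset.univ : Finset p))
          (f := fun i => ((X * Xᴴ) i i).re)
  rw [Finset.card_univ] at h2
  rw [h1]
  refine h2.trans ?_
  gcongr
  unfold N2
  gcongr with i
  refine le_trans ?_ (Finset.single_le_sum (f := fun j => ‖(X * Xᴴ) i j‖ ^ 2)
    (fun _ _ => by positivity) (Finset.mem_univ i))
  rw [← sq_abs]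
  gcongr
  exact Complex.abs_re_le_norm _

/-- typical projection -/
lemma typ_proj (M : Matrix p a ℂ) (Q : Matrix a a ℂ) (hQ : Qᴴ * Q = 1) (lam : a → ℝ)
    (hM : Mᴴ * M = (Q * diagonal (fun i => (lam i : ℂ)) * Qᴴ)ᵀ) (T : Finset a) (f : a → α)
    (hf : ∀ x ∈ T, ∀ y ∈ T, f x = f y → x = y) :
    ∃ P : Matrix α a ℂ, Ctr P ∧ N2 (M * Pᵀ) = ∑ x ∈ T, lam x ∧
      N2 ((M * Pᵀ) * (M * Pᵀ)ᴴ) = ∑ x ∈ T, lam x ^ 2 := by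
  let S : Matrix α a ℂ := Matrix.of fun x y => if y ∈ T ∧ f y = x then 1 else 0
  let T1 : Matrix a a ℂ := diagonal (fun y => if y ∈ T then 1 else 0)
  let L : Matrix a a ℂ := diagonal (fun i => (lam i : ℂ))
  have hS : Sᴴ * S = T1 := by
    ext y y'
    simp only [mul_apply, conjTranspose_apply, S, of_apply, T1, diagonal_apply]
    by_cases hy : y ∈ T
    · rw [Finset.sum_eq_single (f y)]
      · by_cases h : y = y'
        · subst h; simp [hy]
        · rw [if_neg h]
          by_cases hy' : y' ∈ T
          · have : f y' ≠ f y := fun e => h (hf _ hy _ hy' e.symm)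
            simp [this]
          · simp [hy']
      · intro x _ hx; simp [hx.symm]
      · simp
    · simp [hy]
  have hST : (S)ᵀ = Sᴴ := by
    ext x y; simp only [transpose_apply, conjTranspose_apply, S, of_apply]; split_ifs <;> simp
  have hSs : S.map star = S := by
    ext x y; simp only [map_apply, S, of_apply]; split_ifs <;> simp
  have cS : Ctr S := by
    unfold Ctr
    rw [hS]
    have : (1 : Matrix a a ℂ) - T1 = diagonal (fun y => if y ∈ T then 0 else 1) := by
      ext x y; simp only [Matrix.sub_apply, one_apply, T1, diagonal_apply]; split_ifs <;> simp
    rw [this]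
    refine PosSemidef.diagonal fun y => ?_
    dsimp only
    split_ifs <;> simp
  have hQ' : Q * Qᴴ = 1 := mul_eq_one_comm.1 hQ
  refine ⟨S * Qᴴ, cS.mul (Ctr.of_iso (by rw [conjTranspose_conjTranspose, hQ'])), ?_⟩
  set X := M * (S * Qᴴ)ᵀ with hX
  have hG : Xᴴ * X = (S * L * Sᴴ)ᵀ := by
    have e1 : Xᴴ = ((Q * Sᴴ))ᵀ * Mᴴ := by
      rw [hX, conjTranspose_mul]
      congr 1
      have : ((S * Qᴴ)ᵀ)ᴴ = ((S * Qᴴ)ᴴ)ᵀ := rfl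
      rw [this, conjTranspose_mul, conjTranspose_conjTranspose]
    rw [e1, Matrix.mul_assoc, hX, ← Matrix.mul_assoc Mᴴ, hM, ← transpose_mul, ← transpose_mul]
    congr 1
    calc _ = S * (Qᴴ * Q) * L * (Qᴴ * Q) * Sᴴ := by simp only [Matrix.mul_assoc, L]
      _ = _ := by rw [hQ]; simp only [Matrix.mul_one, Matrix.mul_assoc]
  have hLP : L * T1 = diagonal (fun y => ((if y ∈ T then lam y else 0 : ℝ) : ℂ)) := by
    simp only [L, T1, diagonal_mul_diagonal]
    congr 1; ext y; split_ifs <;> simp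
  constructor
  · rw [N2_eq_re, hG, trace_transpose, Matrix.mul_assoc, Matrix.trace_mul_comm, Matrix.mul_assoc, hS,
      hLP, trace_diagonal, ← Complex.ofReal_sum, Complex.ofReal_re, Finset.sum_ite_mem,
      Finset.univ_inter]
  · have : ((X * Xᴴ)ᴴ * (X * Xᴴ)).trace = ((L * T1) * (L * T1)).trace := by
      have h1 : ((X * Xᴴ)ᴴ * (X * Xᴴ)).trace = ((Xᴴ * X) * (Xᴴ * X)).trace := by
        simp only [conjTranspose_mul, conjTranspose_conjTranspose]
        rw [Matrix.mul_assoc X, Matrix.trace_mul_comm X]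
        simp only [Matrix.mul_assoc]
      rw [h1, hG, ← transpose_mul, trace_transpose]
      have h2 : S * L * Sᴴ * (S * L * Sᴴ) = S * (L * (Sᴴ * S) * L * Sᴴ) := by
        simp only [Matrix.mul_assoc]
      rw [h2, Matrix.trace_mul_comm, Matrix.mul_assoc _ Sᴴ S, hS]
      simp only [Matrix.mul_assoc]
    rw [N2_eq_re, this, hLP, diagonal_mul_diagonal, trace_diagonal]
    simp only [← Complex.ofReal_mul]
    rw [← Complex.ofReal_sum, Complex.ofReal_re]
    simp only [← pow_two]
    simp only [ite_pow, ne_eq, OfNat.ofNat_ne_zero, not_false_eq_true, zero_pow]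
    rw [Finset.sum_ite_mem, Finset.univ_inter]

end mub

open Matrix
open scoped ComplexOrder
open scoped Kronecker
set_option linter.unusedSectionVars false

section ent
variable {m n : Type} [Fintype m] [Fintype n] [DecidableEq m] [DecidableEq n]

lemma vn_herm {M : Matrix n n ℂ} (h : M.IsHermitian) :
    vnEntropy M = ∑ i, -(h.eigenvalues i * Real.logb 2 (h.eigenvalues i)) := by
  unfold vnEntropy; rw [dif_pos h]

lemma vn_roots {M : Matrix n n ℂ} (h : M.IsHermitian) :
    vnEntropy M = (M.charpoly.roots.map (fun z : ℂ => -(z.re * Real.logb 2 z.re))).sum := by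
  rw [vn_herm h, h.roots_charpoly_eq_eigenvalues, Multiset.map_map]
  simp only [Function.comp_def, Finset.sum]
  simp

lemma vn_mul_comm (N : Matrix m n ℂ) : vnEntropy (N * Nᴴ) = vnEntropy ((Nᴴ * N)ᵀ) := by
  have h1 : (N * Nᴴ).IsHermitian := isHermitian_mul_conjTranspose_self N
  have h2 : ((Nᴴ * N)ᵀ).IsHermitian := (isHermitian_conjTranspose_mul_self N).transpose
  rw [vn_roots h1, vn_roots h2, charpoly_transpose]
  have h3 := congrArg (fun p => (p.roots.map (fun z : ℂ => -(z.re * Real.logb 2 z.re))).sum)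
    (charpoly_mul_comm' N Nᴴ)
  have h4 : ∀ (k : ℕ) (p : Polynomial ℂ), p.Monic →
      ((Polynomial.X ^ k * p).roots.map (fun z : ℂ => -(z.re * Real.logb 2 z.re))).sum =
      (p.roots.map (fun z : ℂ => -(z.re * Real.logb 2 z.re))).sum := by
    intro k p hp
    rw [Polynomial.roots_mul (mul_ne_zero (pow_ne_zero _ Polynomial.X_ne_zero) hp.ne_zero),
      Polynomial.roots_X_pow]
    simp [Multiset.map_nsmul, Multiset.nsmul_singleton]
  rwa [h4 _ _ (charpoly_monic _), h4 _ _ (charpoly_monic _)] at h3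

end ent

section tpow
variable {a b c : Type} [Fintype a] [Fintype b] [Fintype c] [DecidableEq a] [DecidableEq b]
  [DecidableEq c]

noncomputable def tp (n : ℕ) (M : Matrix a b ℂ) : Matrix (Fin n → a) (Fin n → b) ℂ :=
  Matrix.of fun x y => ∏ k, M (x k) (y k)

lemma sum_prod_fn (n : ℕ) {R : Type} [CommSemiring R] (f : Fin n → a → R) :
    ∑ x : Fin n → a, ∏ k, f k (x k) = ∏ k, ∑ z, f k z := by
  rw [Finset.prod_univ_sum, Fintype.piFinset_univ]

lemma tp_mul (n : ℕ) (M : Matrix a b ℂ) (N : Matrix b c ℂ) : tp n (M * N) = tp n M * tp n N := by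
  ext x y
  simp only [tp, of_apply, mul_apply, ← Finset.prod_mul_distrib]
  rw [sum_prod_fn n (fun k z => M (x k) z * N z (y k))]

lemma tp_conjTranspose (n : ℕ) (M : Matrix a b ℂ) : tp n Mᴴ = (tp n M)ᴴ := by
  ext x y
  simp only [tp, of_apply, conjTranspose_apply, star_prod]

lemma tp_transpose (n : ℕ) (M : Matrix a b ℂ) : tp n Mᵀ = (tp n M)ᵀ := rfl

lemma tp_diagonal (n : ℕ) (d : a → ℝ) : tp n (diagonal (fun i => (d i : ℂ))) =
    diagonal (fun x => ((∏ k, d (x k) : ℝ) : ℂ)) := by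
  ext x y
  simp only [tp, of_apply, diagonal_apply]
  by_cases h : x = y
  · subst h; simp
  · rw [if_neg h]
    obtain ⟨k, hk⟩ := Function.ne_iff.1 h
    exact Finset.prod_eq_zero (Finset.mem_univ k) (by simp [hk])

lemma tp_one (n : ℕ) : tp n (1 : Matrix a a ℂ) = 1 := by
  have := tp_diagonal n (fun _ : a => (1 : ℝ))
  simpa using this

end tpow

section iid
variable {ιA ιB ιR : Type} [Fintype ιA] [DecidableEq ιA] [Fintype ιB] [DecidableEq ιB]
    [Fintype ιR] [DecidableEq ιR] (φ : ιA × (ιB × ιR) → ℂ)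

def ph1 : ιR × (ιA × ιB) → ℂ := fun p => φ (p.2.1, (p.2.2, p.1))

lemma mA_iid (n : ℕ) : (mA (iidVec φ n))ᴴ * mA (iidVec φ n) = tp n ((mA (ph1 φ))ᴴ * mA (ph1 φ)) := by
  rw [tp_mul, tp_conjTranspose]
  ext x y
  simp only [mul_apply, conjTranspose_apply]
  exact (Equiv.sum_comp (Equiv.arrowProdEquivProdArrow (Fin n) (fun _ => ιR) (fun _ => ιB)) _).symm

lemma mB_iid (n : ℕ) : (mB (iidVec φ n))ᴴ * mB (iidVec φ n) = tp n ((mB (ph1 φ))ᴴ * mB (ph1 φ)) := by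
  rw [tp_mul, tp_conjTranspose]
  ext x y
  simp only [mul_apply, conjTranspose_apply]
  exact (Equiv.sum_comp (Equiv.arrowProdEquivProdArrow (Fin n) (fun _ => ιR) (fun _ => ιA)) _).symm

lemma mR_iid (n : ℕ) : ((mR (iidVec φ n))ᵀ)ᴴ * (mR (iidVec φ n))ᵀ =
    tp n (((mR (ph1 φ))ᵀ)ᴴ * (mR (ph1 φ))ᵀ) := by
  rw [tp_mul, tp_conjTranspose]
  ext x y
  simp only [mul_apply, conjTranspose_apply]
  exact (Equiv.sum_comp (Equiv.arrowProdEquivProdArrow (Fin n) (fun _ => ιA) (fun _ => ιB)) _).symm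

lemma redA_eq : redA φ = ((mA (ph1 φ))ᴴ * mA (ph1 φ))ᵀ := by
  ext x y
  simp only [redA, of_apply, transpose_apply, mul_apply, conjTranspose_apply, mA, ph1]
  rw [← Equiv.sum_comp (Equiv.prodComm ιB ιR)]
  exact Finset.sum_congr rfl fun _ _ => mul_comm _ _

lemma redB_eq : redB φ = ((mB (ph1 φ))ᴴ * mB (ph1 φ))ᵀ := by
  ext x y
  simp only [redB, of_apply, transpose_apply, mul_apply, conjTranspose_apply, mB, ph1]
  rw [Fintype.sum_prod_type, Finset.sum_comm]
  exact Finset.sum_congr rfl fun _ _ => Finset.sum_congr rfl fun _ _ => mul_comm _ _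

lemma redR_eq : redR φ = (((mR (ph1 φ))ᵀ)ᴴ * (mR (ph1 φ))ᵀ)ᵀ := by
  ext x y
  simp only [redR, of_apply, transpose_apply, mul_apply, conjTranspose_apply, mR, ph1]
  rw [Fintype.sum_prod_type]
  exact Finset.sum_congr rfl fun _ _ => Finset.sum_congr rfl fun _ _ => mul_comm _ _

lemma vn_BR : vnEntropy (redBR φ) = vnEntropy (redA φ) := by
  let N : Matrix (ιB × ιR) ιA ℂ := Matrix.of fun p a => φ (a, p)
  have h1 : redBR φ = N * Nᴴ := by ext x y; rfl
  have h2 : redA φ = (Nᴴ * N)ᵀ := by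
    ext x y; exact Finset.sum_congr rfl fun _ _ => mul_comm _ _
  rw [h1, h2, vn_mul_comm]

lemma vn_AR : vnEntropy (redAR φ) = vnEntropy (redB φ) := by
  let N : Matrix (ιA × ιR) ιB ℂ := Matrix.of fun p b => φ (p.1, (b, p.2))
  have h1 : redAR φ = N * Nᴴ := by ext x y; rfl
  have h2 : redB φ = (Nᴴ * N)ᵀ := by
    ext x y
    simp only [redB, of_apply, transpose_apply, mul_apply, conjTranspose_apply, N]
    rw [Fintype.sum_prod_type]
    exact Finset.sum_congr rfl fun _ _ => Finset.sum_congr rfl fun _ _ => mul_comm _ _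
  rw [h1, h2, vn_mul_comm]

lemma vn_AB : vnEntropy (redAB φ) = vnEntropy (redR φ) := by
  let N : Matrix (ιA × ιB) ιR ℂ := Matrix.of fun p r => φ (p.1, (p.2, r))
  have h1 : redAB φ = N * Nᴴ := by ext x y; rfl
  have h2 : redR φ = (Nᴴ * N)ᵀ := by
    ext x y
    simp only [redR, of_apply, transpose_apply, mul_apply, conjTranspose_apply, N]
    rw [Fintype.sum_prod_type]
    exact Finset.sum_congr rfl fun _ _ => Finset.sum_congr rfl fun _ _ => mul_comm _ _
  rw [h1, h2, vn_mul_comm]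

lemma nsq_ph1 (hφ : star φ ⬝ᵥ φ = 1) : nsq (ph1 φ) = 1 := by
  have h1 : nsq (ph1 φ) = nsq φ := by
    unfold nsq
    let e : ιR × (ιA × ιB) ≃ ιA × (ιB × ιR) :=
      ⟨fun p => (p.2.1, (p.2.2, p.1)), fun p => (p.2.2, (p.1, p.2.1)), fun _ => rfl, fun _ => rfl⟩
    exact Equiv.sum_comp e (fun x => ‖φ x‖ ^ 2)
  rw [h1]
  have h2 : ((nsq φ : ℝ) : ℂ) = star φ ⬝ᵥ φ := by
    unfold nsq
    rw [Complex.ofReal_sum]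
    exact Finset.sum_congr rfl fun x _ => by rw [normsq_c]; exact mul_comm _ _
  rw [hφ] at h2
  exact_mod_cast h2

lemma nsq_iid (hφ : star φ ⬝ᵥ φ = 1) (n : ℕ) : nsq (iidVec φ n) = 1 := by
  have h1 : nsq (iidVec φ n) = ∑ x : Fin n → ιR × (ιA × ιB), ∏ k, ‖ph1 φ (x k)‖ ^ 2 := by
    unfold nsq
    let e : (Fin n → ιR × (ιA × ιB)) ≃ (Fin n → ιR) × ((Fin n → ιA) × (Fin n → ιB)) :=
      ⟨fun x => (fun k => (x k).1, (fun k => (x k).2.1, fun k => (x k).2.2)),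
       fun p k => (p.1 k, (p.2.1 k, p.2.2 k)), fun _ => rfl, fun _ => rfl⟩
    rw [← Equiv.sum_comp e]
    refine Finset.sum_congr rfl fun x _ => ?_
    simp only [iidVec, norm_prod, Finset.prod_pow]
    rfl
  rw [h1, sum_prod_fn n (fun _ x => ‖ph1 φ x‖ ^ 2)]
  have := nsq_ph1 φ hφ
  unfold nsq at this
  simp [this]

/-- Spectral data of a reduced state. -/
lemma spec_data {p a : Type} [Fintype p] [Fintype a] [DecidableEq p] [DecidableEq a]
    (M : Matrix p a ℂ) (hM : N2 M = 1) :
    ∃ (Q : Matrix a a ℂ) (lam : a → ℝ), Qᴴ * Q = 1 ∧ (∀ i, 0 ≤ lam i) ∧ ∑ i, lam i = 1 ∧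
      (∀ n, tp n (Mᴴ * M) = (tp n Q * diagonal (fun x => ((∏ k, lam (x k) : ℝ) : ℂ)) * (tp n Q)ᴴ)ᵀ) ∧
      vnEntropy ((Mᴴ * M)ᵀ) = ∑ i, -(lam i * Real.logb 2 (lam i)) := by
  have hP : ((Mᴴ * M)ᵀ).PosSemidef := (posSemidef_conjTranspose_mul_self M).transpose
  have h := hP.isHermitian
  obtain ⟨Q, hQ, hQ', hG⟩ := herm_spec h
  refine ⟨Q, h.eigenvalues, hQ, hP.eigenvalues_nonneg, ?_, ?_, vn_herm h⟩
  · have h1 : ((Mᴴ * M)ᵀ).trace = ∑ i, (h.eigenvalues i : ℂ) := by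
      conv_lhs => rw [hG]
      rw [Matrix.trace_mul_comm, ← Matrix.mul_assoc, hQ, Matrix.one_mul, trace_diagonal]
    rw [trace_transpose, ← N2_eq_trace, hM] at h1
    exact_mod_cast h1.symm
  · intro n
    rw [← tp_diagonal, ← tp_conjTranspose, ← tp_mul, ← tp_mul, ← hG, ← tp_transpose,
      transpose_transpose]

end iid

open Matrix
open scoped ComplexOrder
open scoped Kronecker
set_option linter.unusedSectionVars false

section typ
variable {a : Type} [Fintype a] [DecidableEq a]

lemma pair_moment (n : ℕ) (lam u : a → ℝ) (h1 : ∑ i, lam i = 1) (h0 : ∑ i, lam i * u i = 0)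
    (k l : Fin n) : ∑ x : Fin n → a, (∏ j, lam (x j)) * (u (x k) * u (x l)) =
      if k = l then ∑ i, lam i * u i ^ 2 else 0 := by
  have e : ∀ x : Fin n → a, (∏ j, lam (x j)) * (u (x k) * u (x l)) =
      ∏ j, (lam (x j) * ((if j = k then u (x j) else 1) * (if j = l then u (x j) else 1))) := by
    intro x
    rw [Finset.prod_mul_distrib, Finset.prod_mul_distrib, Finset.prod_ite_eq', Finset.prod_ite_eq']
    simp
  simp only [e]
  rw [sum_prod_fn n (fun j z => lam z * ((if j = k then u z else 1) * (if j = l then u z else 1)))]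
  split_ifs with h
  · subst h
    rw [Finset.prod_eq_single k]
    · simp [pow_two]
    · intro j _ hj; simp [hj, h1]
    · simp
  · exact Finset.prod_eq_zero (Finset.mem_univ k) (by simp [h, h0])

lemma second_moment (n : ℕ) (lam u : a → ℝ) (h1 : ∑ i, lam i = 1) (h0 : ∑ i, lam i * u i = 0) :
    ∑ x : Fin n → a, (∏ j, lam (x j)) * (∑ k, u (x k)) ^ 2 = n * ∑ i, lam i * u i ^ 2 := by
  have e : ∀ x : Fin n → a, (∏ j, lam (x j)) * (∑ k, u (x k)) ^ 2 =
      ∑ k, ∑ l, (∏ j, lam (x j)) * (u (x k) * u (x l)) := by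
    intro x
    rw [pow_two, Finset.sum_mul_sum, Finset.mul_sum]
    simp only [Finset.mul_sum]
  simp only [e]
  rw [Finset.sum_comm]
  have : ∀ k : Fin n, ∑ x : Fin n → a, ∑ l, (∏ j, lam (x j)) * (u (x k) * u (x l)) =
      ∑ i, lam i * u i ^ 2 := by
    intro k
    rw [Finset.sum_comm]
    simp only [pair_moment n lam u h1 h0]
    simp
  simp only [this]
  simp

lemma typical (lam : a → ℝ) (hl : ∀ i, 0 ≤ lam i) (h1 : ∑ i, lam i = 1) (h : ℝ)
    (hh : h = ∑ i, -(lam i * Real.logb 2 (lam i))) (δ η : ℝ) (hδ : 0 < δ) (hη : 0 < η) :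
    ∃ N : ℕ, ∀ n ≥ N, ∃ T : Finset (Fin n → a),
      (T.card : ℝ) ≤ 2 ^ ((n : ℝ) * (h + δ)) ∧ 1 - η ≤ ∑ x ∈ T, ∏ k, lam (x k) ∧
      ∑ x ∈ T, (∏ k, lam (x k)) ^ 2 ≤ 2 ^ (-((n : ℝ) * (h - δ))) := by
  set u : a → ℝ := fun i => -Real.logb 2 (lam i) - h with hu
  set V := ∑ i, lam i * u i ^ 2 with hV
  have hV0 : 0 ≤ V := Finset.sum_nonneg fun i _ => mul_nonneg (hl i) (sq_nonneg _)
  have h0 : ∑ i, lam i * u i = 0 := by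
    simp only [hu, mul_sub, Finset.sum_sub_distrib, ← Finset.sum_mul, h1]
    rw [hh]; simp
  obtain ⟨N, hN⟩ := exists_nat_gt (V / (δ ^ 2 * η))
  refine ⟨N + 1, fun n hn => ?_⟩
  have hn0 : (0 : ℝ) < n := by exact_mod_cast (by omega : 0 < n)
  have hnN : V / (δ ^ 2 * η) < n := hN.trans (by exact_mod_cast (by omega : N < n))
  let p : (Fin n → a) → ℝ := fun x => ∏ k, lam (x k)
  have hp0 : ∀ x, 0 ≤ p x := fun x => Finset.prod_nonneg fun k _ => hl _
  have hp1 : ∑ x, p x = 1 := by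
    rw [sum_prod_fn n (fun _ => lam)]; simp [h1]
  let G : (Fin n → a) → ℝ := fun x => ∑ k, u (x k)
  have hG := second_moment n lam u h1 h0
  classical
  let T : Finset (Fin n → a) := Finset.univ.filter fun x => 0 < p x ∧ |G x| ≤ n * δ
  have hpT : ∀ x ∈ T, p x = 2 ^ (-(G x + n * h)) := by
    intro x hx
    have hx0 := (Finset.mem_filter.1 hx).2.1
    have hlk : ∀ k, 0 < lam (x k) := by
      intro k
      refine lt_of_le_of_ne (hl _) fun e => ?_
      exact hx0.ne' (Finset.prod_eq_zero (Finset.mem_univ k) e.symm)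
    have : -(G x + n * h) = ∑ k, Real.logb 2 (lam (x k)) := by
      simp only [G, hu, Finset.sum_sub_distrib, Finset.sum_neg_distrib]
      simp
    rw [this, Real.rpow_sum_of_pos (by norm_num)]
    exact Finset.prod_congr rfl fun k _ => (Real.rpow_logb (by norm_num) (by norm_num) (hlk k)).symm
  have hTG : ∀ x ∈ T, |G x| ≤ n * δ := fun x hx => (Finset.mem_filter.1 hx).2.2
  have hub : ∀ x ∈ T, p x ≤ 2 ^ (-((n : ℝ) * (h - δ))) := by
    intro x hx
    rw [hpT x hx]
    apply Real.rpow_le_rpow_of_exponent_le (by norm_num)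
    have := (abs_le.1 (hTG x hx)).1
    linarith
  have hlb : ∀ x ∈ T, 2 ^ (-((n : ℝ) * (h + δ))) ≤ p x := by
    intro x hx
    rw [hpT x hx]
    apply Real.rpow_le_rpow_of_exponent_le (by norm_num)
    have := (abs_le.1 (hTG x hx)).2
    linarith
  have hTle : ∑ x ∈ T, p x ≤ 1 := by
    rw [← hp1]; exact Finset.sum_le_sum_of_subset_of_nonneg (Finset.subset_univ _) fun x _ _ => hp0 x
  refine ⟨T, ?_, ?_, ?_⟩
  · have := Finset.card_nsmul_le_sum T p _ hlb
    rw [nsmul_eq_mul, Real.rpow_neg (by norm_num)] at this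
    have h3 := this.trans hTle
    have h4 : (0 : ℝ) < 2 ^ ((n : ℝ) * (h + δ)) := by positivity
    rwa [← div_eq_mul_inv, div_le_one h4] at h3
  · have h2 : ∑ x ∈ Tᶜ, p x * (n * δ) ^ 2 ≤ n * V := by
      rw [← hG]
      refine le_trans ?_ (Finset.sum_le_sum_of_subset_of_nonneg (Finset.subset_univ Tᶜ)
        fun x _ _ => mul_nonneg (hp0 x) (sq_nonneg _))
      refine Finset.sum_le_sum fun x hx => ?_
      have hx' : ¬ (0 < p x ∧ |G x| ≤ n * δ) := by simpa [T] using hx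
      by_cases hpx : 0 < p x
      · have h5 : n * δ < |G x| := by
          by_contra hc; exact hx' ⟨hpx, not_lt.1 hc⟩
        have h6 : (n * δ) ^ 2 ≤ (G x) ^ 2 := by
          rw [← sq_abs (G x)]; gcongr
        exact mul_le_mul_of_nonneg_left h6 (hp0 x)
      · have : p x = 0 := le_antisymm (not_lt.1 hpx) (hp0 x)
        have h7 : ∏ j, lam (x j) = 0 := this
        rw [this, h7]; simp
    rw [← Finset.sum_mul] at h2
    have h3 : ∑ x ∈ T, p x + ∑ x ∈ Tᶜ, p x = 1 := by rw [Finset.sum_add_sum_compl, hp1]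
    have h4 : ∑ x ∈ Tᶜ, p x ≤ η := by
      have h8 : V ≤ n * (δ ^ 2 * η) := by
        rw [div_lt_iff₀ (by positivity)] at hnN; exact hnN.le
      have h9 : (∑ x ∈ Tᶜ, p x) * (n * δ) ^ 2 ≤ η * (n * δ) ^ 2 := by
        refine h2.trans ?_
        calc (n : ℝ) * V ≤ n * (n * (δ ^ 2 * η)) := by gcongr
          _ = _ := by ring
      exact le_of_mul_le_mul_right h9 (by positivity)
    show 1 - η ≤ ∑ x ∈ T, p x
    linarith
  · have : ∀ x ∈ T, p x ^ 2 ≤ 2 ^ (-((n : ℝ) * (h - δ))) * p x := by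
      intro x hx
      rw [pow_two]; exact mul_le_mul_of_nonneg_right (hub x hx) (hp0 x)
    refine (Finset.sum_le_sum this).trans ?_
    rw [← Finset.mul_sum]
    exact mul_le_of_le_one_right (by positivity) hTle

end typ

open Matrix
open scoped ComplexOrder
open scoped Kronecker
set_option linter.unusedSectionVars false

section fin

lemma party {p a : Type} [Fintype p] [Fintype a] [DecidableEq p] [DecidableEq a]
    (M1 : Matrix p a ℂ) (hM1 : N2 M1 = 1) (h : ℝ) (hh : h = vnEntropy ((M1ᴴ * M1)ᵀ))
    (δ η : ℝ) (hδ : 0 < δ) (hη : 0 < η) (hη1 : η < 1) :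
    ∃ N : ℕ, ∀ n ≥ N, ∃ t : ℕ, 1 ≤ t ∧ (t : ℝ) ≤ 2 ^ ((n : ℝ) * (h + δ)) ∧
      ∀ (α p' : Type) [Fintype α] [DecidableEq α] [Fintype p'] [DecidableEq p'], t ≤ Fintype.card α →
      ∀ M : Matrix p' (Fin n → a) ℂ, Mᴴ * M = tp n (M1ᴴ * M1) →
      ∃ P : Matrix α (Fin n → a) ℂ, Ctr P ∧ 1 - η ≤ N2 (M * Pᵀ) ∧
        N2 ((M * Pᵀ) * (M * Pᵀ)ᴴ) ≤ 2 ^ (-((n : ℝ) * (h - δ))) := by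
  obtain ⟨Q, lam, hQ, hl, hl1, htp, hv⟩ := spec_data M1 hM1
  obtain ⟨N, hN⟩ := typical lam hl hl1 h (hh.trans hv) δ η hδ hη
  refine ⟨N, fun n hn => ?_⟩
  obtain ⟨T, hT1, hT2, hT3⟩ := hN n hn
  have hTpos : 1 ≤ T.card := by
    rw [Nat.one_le_iff_ne_zero]
    intro h0
    rw [Finset.card_eq_zero] at h0
    rw [h0, Finset.sum_empty] at hT2
    linarith
  refine ⟨T.card, hTpos, hT1, ?_⟩
  intro α p' _ _ _ _ hα M hM
  have : Nonempty α := Fintype.card_pos_iff.1 (lt_of_lt_of_le (by omega) hα)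
  obtain ⟨a0⟩ := this
  obtain ⟨e⟩ : Nonempty (T ↪ α) := Function.Embedding.nonempty_of_card_le (by simpa using hα)
  rw [htp] at hM
  have hQn : (tp n Q)ᴴ * tp n Q = 1 := by rw [← tp_conjTranspose, ← tp_mul, hQ, tp_one]
  obtain ⟨P, hP1, hP2, hP3⟩ := typ_proj M (tp n Q) hQn _ hM T
    (fun x => if hx : x ∈ T then e ⟨x, hx⟩ else a0) (by
      intro x hx y hy hxy
      rw [dif_pos hx, dif_pos hy] at hxy
      exact congrArg Subtype.val (e.injective hxy))
  exact ⟨P, hP1, by rw [hP2]; exact hT2, by rw [hP3]; exact hT3⟩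

lemma tendsto_two_pow (g C ε : ℝ) (hg : 0 < g) (hC : 0 < C) (hε : 0 < ε) :
    ∃ N : ℕ, ∀ n ≥ N, C * (2 : ℝ) ^ (-((n : ℝ) * g)) < ε := by
  have h1 : (2 : ℝ) ^ (-g) < 1 := Real.rpow_lt_one_of_one_lt_of_neg (by norm_num) (by linarith)
  obtain ⟨N, hN⟩ := exists_pow_lt_of_lt_one (div_pos hε hC) h1
  refine ⟨N, fun n hn => ?_⟩
  have h2 : (2 : ℝ) ^ (-((n : ℝ) * g)) = ((2 : ℝ) ^ (-g)) ^ n := by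
    rw [← Real.rpow_natCast, ← Real.rpow_mul (by norm_num)]; congr 1; ring
  rw [h2]
  have h3 : ((2 : ℝ) ^ (-g)) ^ n ≤ ((2 : ℝ) ^ (-g)) ^ N :=
    pow_le_pow_of_le_one (by positivity) h1.le hn
  have := lt_of_le_of_lt h3 hN
  rw [lt_div_iff₀ hC] at this
  linarith

variable {ιA ιB ιR : Type} [Fintype ιA] [DecidableEq ιA] [Fintype ιB] [DecidableEq ιB]
    [Fintype ιR] [DecidableEq ιR]

lemma N2_transpose' {p q : Type} [Fintype p] [Fintype q] (M : Matrix p q ℂ) : N2 Mᵀ = N2 M := by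
  unfold N2; rw [Finset.sum_comm]; rfl

lemma subadd (φ : ιA × (ιB × ιR) → ℂ) (hφ : star φ ⬝ᵥ φ = 1) :
    vnEntropy (redR φ) ≤ vnEntropy (redA φ) + vnEntropy (redB φ) := by
  by_contra hc
  push Not at hc
  set hA := vnEntropy (redA φ) with hhA
  set hB := vnEntropy (redB φ) with hhB
  set hR := vnEntropy (redR φ) with hhR
  set δ := (hR - hA - hB) / 6 with hδ
  have hδ0 : 0 < δ := by rw [hδ]; linarith
  have n1 := nsq_ph1 φ hφ
  obtain ⟨NA, hNA⟩ := party (mA (ph1 φ)) (by rw [N2_mA, n1]) hA (by rw [hhA, redA_eq]) δ (1/6) hδ0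
    (by norm_num) (by norm_num)
  obtain ⟨NB, hNB⟩ := party (mB (ph1 φ)) (by rw [N2_mB, n1]) hB (by rw [hhB, redB_eq]) δ (1/6) hδ0
    (by norm_num) (by norm_num)
  obtain ⟨NR, hNR⟩ := party (mR (ph1 φ))ᵀ (by rw [N2_transpose', N2_mR, n1]) hR
    (by rw [hhR, redR_eq]) δ (1/6) hδ0 (by norm_num) (by norm_num)
  obtain ⟨N0, hN0⟩ := tendsto_two_pow (3 * δ) 1 (1/4) (by linarith) (by norm_num) (by norm_num)
  set n := max (max NA NB) (max NR N0)
  obtain ⟨tA, tA1, tA2, hPA⟩ := hNA n (by simp [n])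
  obtain ⟨tB, tB1, tB2, hPB⟩ := hNB n (by simp [n])
  obtain ⟨tR, tR1, tR2, hPR⟩ := hNR n (by simp [n])
  have h0 := hN0 n (by simp [n])
  set ψ := iidVec φ n
  obtain ⟨PA, cA, pA1, pA2⟩ := hPA (Fin tA) _ (by simp) (mA ψ) (mA_iid φ n)
  obtain ⟨PB, cB, pB1, pB2⟩ := hPB (Fin tB) _ (by simp) (mB ψ) (mB_iid φ n)
  obtain ⟨PR, cR, pR1, pR2⟩ := hPR (Fin tR) _ (by simp) (mR ψ)ᵀ (mR_iid φ n)
  have hu := union3 ψ cR cA cB (nsq_iid φ hφ n) _ _ _ pR1 pA1 pB1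
  set χ := (PR ⊗ₖ (PA ⊗ₖ PB)) *ᵥ ψ with hχ
  have e1 : (mR χ)ᵀ = (PA ⊗ₖ PB) * ((mR ψ)ᵀ * PRᵀ) := by
    rw [hχ, mR_kron, transpose_mul, transpose_mul, transpose_transpose]
  have e2 := N2_cs_dim ((mR χ)ᵀ)
  have e3 := mu_bound (cA.kron cB) ((mR ψ)ᵀ * PRᵀ)
  rw [← e1] at e3
  rw [N2_transpose', N2_mR] at e2
  have e4 := e3.trans pR2
  have e5 : (1/4 : ℝ) ≤ nsq χ ^ 2 := by nlinarith
  have e6 : (Fintype.card (Fin tA × Fin tB) : ℝ) ≤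
      2 ^ ((n : ℝ) * (hA + δ)) * 2 ^ ((n : ℝ) * (hB + δ)) := by
    simp only [Fintype.card_prod, Fintype.card_fin, Nat.cast_mul]
    gcongr
  have e7 : nsq χ ^ 2 ≤ 2 ^ ((n : ℝ) * (hA + δ)) * 2 ^ ((n : ℝ) * (hB + δ)) *
      2 ^ (-((n : ℝ) * (hR - δ))) := e2.trans (by gcongr; exact N2_nonneg _)
  rw [← Real.rpow_add (by norm_num), ← Real.rpow_add (by norm_num)] at e7
  have e8 : (n : ℝ) * (hA + δ) + (n : ℝ) * (hB + δ) + -((n : ℝ) * (hR - δ)) = -(n * (3 * δ)) := by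
    have : hR = hA + hB + 6 * δ := by rw [hδ]; ring
    rw [this]; ring
  rw [e8] at e7
  linarith

lemma err_bound (R wA wB cA cB muA muB r x y p q E : ℝ) (hR : 0 ≤ R) (hwA : 0 < wA) (hwB : 0 < wB)
    (hp : 0 < p) (hq : 0 < q) (hmA : 0 ≤ muA) (hmB : 0 ≤ muB) (hRr : R ≤ r) (hx : wA ≤ 3 * x)
    (hy : wB ≤ 3 * y) (hcA : p / 2 ≤ cA) (hcB : q / 2 ≤ cB)
    (h1 : r * x * y / (p * q) ≤ E) (h2 : r * x * muB / p ≤ E) (h3 : r * y * muA / q ≤ E) :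
    Real.sqrt (R * (wA * wB)) * Real.sqrt (1 / (cA * cB) + muB / (cA * wB) + muA / (wA * cB)) ≤
      Real.sqrt (48 * E) := by
  have hcA0 : 0 < cA := by linarith
  have hcB0 : 0 < cB := by linarith
  have hx0 : 0 < x := by linarith
  have hy0 : 0 < y := by linarith
  have hr0 : 0 ≤ r := by linarith
  rw [← Real.sqrt_mul (by positivity)]
  apply Real.sqrt_le_sqrt
  have e : R * (wA * wB) * (1 / (cA * cB) + muB / (cA * wB) + muA / (wA * cB)) =
      R * wA * wB / (cA * cB) + R * wA * muB / cA + R * wB * muA / cB := by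
    field_simp
  rw [e]
  have t1 : R * wA * wB / (cA * cB) ≤ r * (3 * x) * (3 * y) / (p / 2 * (q / 2)) := by gcongr
  have t2 : R * wA * muB / cA ≤ r * (3 * x) * muB / (p / 2) := by gcongr
  have t3 : R * wB * muA / cB ≤ r * (3 * y) * muA / (q / 2) := by gcongr
  have s1 : r * (3 * x) * (3 * y) / (p / 2 * (q / 2)) = 36 * (r * x * y / (p * q)) := by
    field_simp; ring
  have s2 : r * (3 * x) * muB / (p / 2) = 6 * (r * x * muB / p) := by field_simp; ring
  have s3 : r * (3 * y) * muA / (q / 2) = 6 * (r * y * muA / q) := by field_simp; ring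
  linarith

/-- dimensions of the compressed system and the ancilla -/
lemma dims (n t : ℕ) (Q h δ : ℝ) (hQ : 0 ≤ Q) (hδ : 0 < δ) (ht1 : 1 ≤ t)
    (ht : (t : ℝ) ≤ 2 ^ ((n : ℝ) * (h + δ))) :
    ∃ c w : ℕ, 1 ≤ c ∧ 1 ≤ w ∧ t ≤ c * w ∧ (2 : ℝ) ^ ((n : ℝ) * Q) / 2 ≤ c ∧
      (c : ℝ) ≤ 2 ^ ((n : ℝ) * Q) ∧ (w : ℝ) ≤ 3 * 2 ^ ((n : ℝ) * (max 0 (h - Q) + δ)) := by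
  set z : ℝ := 2 ^ ((n : ℝ) * Q) with hz
  have hz1 : 1 ≤ z := Real.one_le_rpow (by norm_num) (by positivity)
  have hc1 : 1 ≤ ⌊z⌋₊ := Nat.le_floor (by simpa using hz1)
  have hc2 : z / 2 ≤ (⌊z⌋₊ : ℝ) := by
    have := Nat.lt_floor_add_one z
    have h2 : (1 : ℝ) ≤ (⌊z⌋₊ : ℝ) := by exact_mod_cast hc1
    linarith
  have hc3 : (⌊z⌋₊ : ℝ) ≤ z := Nat.floor_le (by linarith)
  set c := ⌊z⌋₊
  have hc0 : (0 : ℝ) < c := by exact_mod_cast hc1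
  refine ⟨c, ⌈(t : ℝ) / c⌉₊, hc1, ?_, ?_, hc2, hc3, ?_⟩
  · rw [Nat.one_le_ceil_iff]
    have : (0 : ℝ) < t := by exact_mod_cast ht1
    positivity
  · have := Nat.le_ceil ((t : ℝ) / c)
    rw [div_le_iff₀ hc0] at this
    have h2 : (t : ℝ) ≤ ((c * ⌈(t : ℝ) / c⌉₊ : ℕ) : ℝ) := by push_cast; linarith
    exact_mod_cast h2
  · have h1 := Nat.ceil_lt_add_one (a := (t : ℝ) / c) (by positivity)
    have h2 : (t : ℝ) / c ≤ 2 ^ ((n : ℝ) * (h + δ)) / (z / 2) := by gcongr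
    have h3 : (2 : ℝ) ^ ((n : ℝ) * (h + δ)) / (z / 2) = 2 * 2 ^ ((n : ℝ) * (h - Q + δ)) := by
      have : (n : ℝ) * (h - Q + δ) = (n : ℝ) * (h + δ) - n * Q := by ring
      rw [this, Real.rpow_sub (by norm_num), ← hz]
      field_simp
    have h4 : (2 : ℝ) ^ ((n : ℝ) * (h - Q + δ)) ≤ 2 ^ ((n : ℝ) * (max 0 (h - Q) + δ)) := by
      apply Real.rpow_le_rpow_of_exponent_le (by norm_num)
      gcongr
      exact le_max_right _ _
    have h5 : (1 : ℝ) ≤ 2 ^ ((n : ℝ) * (max 0 (h - Q) + δ)) :=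
      Real.one_le_rpow (by norm_num) (by
        have := le_max_left 0 (h - Q)
        positivity)
    linarith

end fin

set_option maxHeartbeats 1000000

/-- **Theorem 5: inner bound for fully quantum distributed compression.**  Every rate
pair `(Q_A, Q_B)` of nonnegative reals with `Q_A > ½I(A;R)`, `Q_B > ½I(B;R)` and
`Q_A + Q_B > ½J(A;B)` is achievable, where `J(A;B) = H(A) + H(B) + H(AB)`. -/
theorem distributed_compression_inner_bound
    {ιA ιB ιR : Type} [Fintype ιA] [DecidableEq ιA] [Fintype ιB] [DecidableEq ιB]
    [Fintype ιR] [DecidableEq ιR]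
    (φ : ιA × (ιB × ιR) → ℂ) (hφ : star φ ⬝ᵥ φ = 1)
    (QA QB : ℝ) (hQA0 : 0 ≤ QA) (hQB0 : 0 ≤ QB)
    (hQA : QA > (1/2) * (vnEntropy (redA φ) + vnEntropy (redR φ) - vnEntropy (redAR φ)))
    (hQB : QB > (1/2) * (vnEntropy (redB φ) + vnEntropy (redR φ) - vnEntropy (redBR φ)))
    (hsum : QA + QB >
      (1/2) * (vnEntropy (redA φ) + vnEntropy (redB φ) + vnEntropy (redAB φ))) :
    achievable φ QA QB := by
  rw [vn_AR] at hQA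
  rw [vn_BR] at hQB
  rw [vn_AB] at hsum
  have hsub := subadd φ hφ
  set hA := vnEntropy (redA φ) with hhA
  set hB := vnEntropy (redB φ) with hhB
  set hR := vnEntropy (redR φ) with hhR
  have hne : Nonempty (ιA × (ιB × ιR)) := by
    by_contra hc
    rw [not_nonempty_iff] at hc
    simp [dotProduct] at hφ
  have neA : Nonempty ιA := ⟨hne.some.1⟩
  have neB : Nonempty ιB := ⟨hne.some.2.1⟩
  intro ε hε
  -- error parameters
  set ε' := min ε 1 with hε'
  have hε0 : 0 < ε' := lt_min hε one_pos
  have hε1 : ε' ≤ 1 := min_le_right _ _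
  have hεε : ε' ≤ ε := min_le_left _ _
  set η := (ε' / 8) ^ 2 / 3 with hη
  have hη0 : 0 < η := by rw [hη]; positivity
  have hη3 : η + η + η = (ε' / 8) ^ 2 := by rw [hη]; ring
  have hq2 : (ε' / 8) ^ 2 ≤ ε' / 8 := by
    rw [pow_two]
    have : ε' / 8 * (ε' / 8) ≤ ε' / 8 * 1 :=
      mul_le_mul_of_nonneg_left (by linarith only [hε1]) (by positivity)
    linarith only [this]
  have hη1 : η < 1 := by linarith only [hq2, hη3, hη0, hε1]
  -- exponent gap
  set mA' := max 0 (hA - QA) with hmA'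
  set mB' := max 0 (hB - QB) with hmB'
  have e1 : hR + mA' + mB' - QA - QB < 0 := by
    rcases max_choice 0 (hA - QA) with h1 | h1 <;> rcases max_choice 0 (hB - QB) with h2 | h2 <;>
    have h3 := le_max_left 0 (hA - QA) <;> have h4 := le_max_left 0 (hB - QB) <;>
    have h5 := le_max_right 0 (hA - QA) <;> have h6 := le_max_right 0 (hB - QB) <;>
    rw [h1] at hmA' <;> rw [h2] at hmB' <;> rw [h1] at h3 h5 <;> rw [h2] at h4 h6 <;> linarith
  have e2 : hR + mA' - hB - QA < 0 := by
    rcases max_choice 0 (hA - QA) with h1 | h1 <;>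
    have h5 := le_max_right 0 (hA - QA) <;>
    rw [h1] at hmA' <;> rw [h1] at h5 <;> linarith
  have e3 : hR + mB' - hA - QB < 0 := by
    rcases max_choice 0 (hB - QB) with h1 | h1 <;>
    have h5 := le_max_right 0 (hB - QB) <;>
    rw [h1] at hmB' <;> rw [h1] at h5 <;> linarith
  obtain ⟨g, hg0, hg1, hg2, hg3⟩ : ∃ g : ℝ, 0 < g ∧ hR + mA' + mB' - QA - QB ≤ -g ∧
      hR + mA' - hB - QA ≤ -g ∧ hR + mB' - hA - QB ≤ -g := by
    refine ⟨min (-(hR + mA' + mB' - QA - QB)) (min (-(hR + mA' - hB - QA)) (-(hR + mB' - hA - QB))),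
      lt_min (by linarith) (lt_min (by linarith) (by linarith)), ?_, ?_, ?_⟩
    · have := min_le_left (-(hR + mA' + mB' - QA - QB))
        (min (-(hR + mA' - hB - QA)) (-(hR + mB' - hA - QB)))
      linarith
    · have := (min_le_right (-(hR + mA' + mB' - QA - QB))
        (min (-(hR + mA' - hB - QA)) (-(hR + mB' - hA - QB)))).trans (min_le_left _ _)
      linarith
    · have := (min_le_right (-(hR + mA' + mB' - QA - QB))
        (min (-(hR + mA' - hB - QA)) (-(hR + mB' - hA - QB)))).trans (min_le_right _ _)
      linarith
  set δ := g / 6 with hδ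
  have hδ0 : 0 < δ := by rw [hδ]; linarith
  have n1 := nsq_ph1 φ hφ
  obtain ⟨NA, hNA⟩ := party (mA (ph1 φ)) (by rw [N2_mA, n1]) hA (by rw [hhA, redA_eq]) δ η hδ0 hη0 hη1
  obtain ⟨NB, hNB⟩ := party (mB (ph1 φ)) (by rw [N2_mB, n1]) hB (by rw [hhB, redB_eq]) δ η hδ0 hη0 hη1
  obtain ⟨NR, hNR⟩ := party (mR (ph1 φ))ᵀ (by rw [N2_transpose', N2_mR, n1]) hR
    (by rw [hhR, redR_eq]) δ η hδ0 hη0 hη1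
  obtain ⟨N0, hN0⟩ := tendsto_two_pow (g / 2) 48 ((ε' / 2) ^ 2) (by linarith) (by norm_num)
    (by positivity)
  refine ⟨max (max NA NB) (max NR N0), fun n hn => ?_⟩
  simp only [max_le_iff] at hn
  obtain ⟨tA, tA1, tA2, hPA⟩ := hNA n hn.1.1
  obtain ⟨tB, tB1, tB2, hPB⟩ := hNB n hn.1.2
  obtain ⟨tR, tR1, tR2, hPR⟩ := hNR n hn.2.1
  have h0 := hN0 n hn.2.2
  obtain ⟨cA, wA, hcA1, hwA1, htA, hcA2, hcA3, hwA2⟩ := dims n tA QA hA δ hQA0 hδ0 tA1 tA2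
  obtain ⟨cB, wB, hcB1, hwB1, htB, hcB2, hcB3, hwB2⟩ := dims n tB QB hB δ hQB0 hδ0 tB1 tB2
  have : Nonempty (Fin cA) := ⟨⟨0, hcA1⟩⟩
  have : Nonempty (Fin wA) := ⟨⟨0, hwA1⟩⟩
  have : Nonempty (Fin cB) := ⟨⟨0, hcB1⟩⟩
  have : Nonempty (Fin wB) := ⟨⟨0, hwB1⟩⟩
  obtain ⟨PA, kA, pA1, pA2⟩ := hPA (Fin cA × Fin wA) _ (by simpa using htA) (mA (iidVec φ n))
    (mA_iid φ n)
  obtain ⟨PB, kB, pB1, pB2⟩ := hPB (Fin cB × Fin wB) _ (by simpa using htB) (mB (iidVec φ n))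
    (mB_iid φ n)
  obtain ⟨PR, kR, pR1, pR2⟩ := hPR (Fin tR) _ (by simp) (mR (iidVec φ n))ᵀ (mR_iid φ n)
  have hu := union3 (iidVec φ n) kR kA kB (nsq_iid φ hφ n) _ _ _ pR1 pA1 pB1
  have qA : N2 (mA ((PR ⊗ₖ (PA ⊗ₖ PB)) *ᵥ iidVec φ n) * (mA ((PR ⊗ₖ (PA ⊗ₖ PB)) *ᵥ iidVec φ n))ᴴ) ≤
      2 ^ (-((n : ℝ) * (hA - δ))) := by
    rw [mA_kron, Matrix.mul_assoc (PR ⊗ₖ PB)]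
    exact (mu_bound (kR.kron kB) _).trans pA2
  have qB : N2 (mB ((PR ⊗ₖ (PA ⊗ₖ PB)) *ᵥ iidVec φ n) * (mB ((PR ⊗ₖ (PA ⊗ₖ PB)) *ᵥ iidVec φ n))ᴴ) ≤
      2 ^ (-((n : ℝ) * (hB - δ))) := by
    rw [mB_kron, Matrix.mul_assoc (PR ⊗ₖ PA)]
    exact (mu_bound (kR.kron kA) _).trans pB2
  obtain ⟨EA0, EB0, Z, kEA, kEB, kZ, hamp⟩ := oneshot (iidVec φ n) (nsq_iid φ hφ n) PR PA PB kR kA kB _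
    rfl _ _ _ hu qA qB
  simp only [Fintype.card_fin] at hamp
  have hexp : ∀ z : ℝ, z ≤ -g → (2 : ℝ) ^ ((n : ℝ) * (z + 3 * δ)) ≤ 2 ^ (-((n : ℝ) * (g / 2))) := by
    intro z hz
    apply Real.rpow_le_rpow_of_exponent_le (by norm_num)
    rw [← mul_neg]
    have : z + 3 * δ ≤ -(g / 2) := by rw [hδ]; linarith
    gcongr
  have herr := err_bound tR wA wB cA cB (2 ^ (-((n : ℝ) * (hA - δ)))) (2 ^ (-((n : ℝ) * (hB - δ))))
    (2 ^ ((n : ℝ) * (hR + δ))) (2 ^ ((n : ℝ) * (mA' + δ))) (2 ^ ((n : ℝ) * (mB' + δ)))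
    (2 ^ ((n : ℝ) * QA)) (2 ^ ((n : ℝ) * QB)) (2 ^ (-((n : ℝ) * (g / 2))))
    (by positivity) (by exact_mod_cast hwA1) (by exact_mod_cast hwB1) (by positivity) (by positivity)
    (by positivity) (by positivity) tR2 hwA2 hwB2 hcA2 hcB2
    (by
      refine le_trans (le_of_eq ?_) (hexp _ hg1)
      rw [← Real.rpow_add (by norm_num), ← Real.rpow_add (by norm_num),
        ← Real.rpow_add (by norm_num), ← Real.rpow_sub (by norm_num)]
      congr 1; ring)
    (by
      refine le_trans (le_of_eq ?_) (hexp _ hg2)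
      rw [← Real.rpow_add (by norm_num), ← Real.rpow_add (by norm_num),
        ← Real.rpow_sub (by norm_num)]
      congr 1; ring)
    (by
      refine le_trans (le_of_eq ?_) (hexp _ hg3)
      rw [← Real.rpow_add (by norm_num), ← Real.rpow_add (by norm_num),
        ← Real.rpow_sub (by norm_num)]
      congr 1; ring)
  have herr2 : Real.sqrt (48 * 2 ^ (-((n : ℝ) * (g / 2)))) ≤ ε' / 2 := by
    rw [← Real.sqrt_sq (by positivity : 0 ≤ ε' / 2)]
    exact Real.sqrt_le_sqrt h0.le
  have hsq : Real.sqrt (η + η + η) = ε' / 8 := by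
    rw [hη3, Real.sqrt_sq (by positivity)]
  rw [hsq, hη3] at hamp
  have hx : 1 - ε' / 2 ≤ (((tM (Fin wA × Fin wB) (iidVec φ n))ᴴ * Z *
      reN (((1 : Matrix (Fin n → ιR) (Fin n → ιR) ℂ) ⊗ₖ (EA0 ⊗ₖ EB0)) *ᵥ iidVec φ n)).trace).re := by
    refine le_trans ?_ hamp
    have hee := herr.trans herr2
    linarith only [hee, hq2, hε0]
  obtain ⟨dA, dB, dC, EA, EB, D, hEA, hEB, hD, hF⟩ := fid_ge φ EA0 EB0 Z kEA kEB kZ (1 - ε' / 2)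
    (by linarith) hx
  refine ⟨cA, dA, cB, dB, dC, EA, EB, D, hEA, hEB, hD, ?_, ?_, ?_⟩
  · rw [Real.logb_le_iff_le_rpow (by norm_num) (by exact_mod_cast hcA1)]
    exact hcA3
  · rw [Real.logb_le_iff_le_rpow (by norm_num) (by exact_mod_cast hcB1)]
    exact hcB3
  · refine le_trans ?_ hF
    have hee := sq_nonneg (ε' / 2)
    have : (1 - ε' / 2) ^ 2 = 1 - ε' + (ε' / 2) ^ 2 := by ring
    rw [this]
    linarith only [hee, hεε]
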